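/- arXiv:math/0405052 — 4 statements merged into one kernel-verified Lean document; each statement's English description precedes it below -/
import Mathlib

section
/- Let H ≤ G be a subgroup such that char(F) does not divide the index [G:H]. If the invariant ring S[V]^H is Cohen-Macaulay, then S[V]^G is Cohen-Macaulay as well. -/
set_option synthInstance.maxHeartbeats 1000000
set_option maxHeartbeats 1000000

open MvPolynomial

/-- The algebra endomorphism of the polynomial ring `S[V] = F[X₁,…,Xₙ]` induced by a matrix
acting (on the right) on the coefficient row vectors of linear forms: the variable `Xᵢ`
(the `i`-th basis vector of `V`) is sent to the linear form given by the `i`-th row of `M`. -/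
noncomputable def matSub {F : Type*} [CommRing F] {n : ℕ} (M : Matrix (Fin n) (Fin n) F) :
    MvPolynomial (Fin n) F →ₐ[F] MvPolynomial (Fin n) F :=
  aeval (fun i => ∑ j, M i j • X j)

/-- The invariant ring `S[V]^G` of a matrix representation `ρ` of `G` on `V = Fⁿ`
(a right `FG`-module via `v ↦ v · ρ σ` on row vectors). -/
noncomputable def invariants {F : Type*} [CommRing F] {n : ℕ} {G : Type*} [Group G]
    (ρ : G →* GL (Fin n) F) : Subalgebra F (MvPolynomial (Fin n) F) where
  carrier := {p | ∀ σ : G, matSub ((ρ σ : Matrix (Fin n) (Fin n) F)) p = p}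
  mul_mem' := fun ha hb σ => by rw [map_mul, ha σ, hb σ]
  add_mem' := fun ha hb σ => by rw [map_add, ha σ, hb σ]
  one_mem' := fun σ => map_one _
  zero_mem' := fun σ => map_zero _
  algebraMap_mem' := fun r σ => AlgHom.commutes _ r

/-- A homogeneous system of parameters (a set of primary invariants) of an invariant ring
`R ⊆ S[V]`, `V` of dimension `n`: a family of `n = dim_F V` algebraically independent
homogeneous elements of positive degree over whose generated polynomial subalgebra `R` is a
finitely generated module. -/
def IsHSOP {F : Type*} [Field F] {n : ℕ} (R : Subalgebra F (MvPolynomial (Fin n) F))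
    (f : Fin n → R) : Prop :=
  AlgebraicIndependent F f ∧
  (∀ i, ∃ d : ℕ, 0 < d ∧ (f i : MvPolynomial (Fin n) F).IsHomogeneous d) ∧
  Module.Finite (Algebra.adjoin F (Set.range f)) R

/-- `R` is Cohen-Macaulay: `R` is a free module over the subalgebra generated by some
homogeneous system of parameters. -/
def IsCM {F : Type*} [Field F] {n : ℕ} (R : Subalgebra F (MvPolynomial (Fin n) F)) : Prop :=
  ∃ f : Fin n → R, IsHSOP R f ∧ Module.Free (Algebra.adjoin F (Set.range f)) R

/-!
A graded algebra is free over the polynomial subalgebra generated by a homogeneous system of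
parameters exactly when the latter is a regular sequence, so it suffices to find a regular sequence
of `n` homogeneous parameters in `S[V]^G`. Start from one in `R = S[V]^H`. Since `R` is integral
over `T = S[V]^G`, every prime of `R` that omits some homogeneous element of positive degree omits
one from `T`, and homogeneous prime avoidance produces a homogeneous element of `T`
that is regular whenever some homogeneous element of `R` is. As regular sequences of homogeneous
elements of positive degree may be permuted, the members of the sequence can be exchanged one at a
time for elements of `T`.

The averaging operator over `G ⧸ H` makes `T` a `T`-linear direct summand of `R`. Hence the new
sequence `g` remains regular on `T`, and `T ⧸ (g)` is finite-dimensional because `R ⧸ (g)` has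
Krull dimension zero. Finally, a homogeneous basis of `T ⧸ (g)` lifts to a basis of `T` over `F[g]`:
it spans by the graded Nakayama argument and is independent by regularity.
-/

open RingTheory.Sequence

section RegularSequences

theorem ofList_ofFn {R : Type*} [Semiring R] {n : ℕ} (g : Fin n → R) :
    Ideal.ofList (List.ofFn g) = Ideal.span (Set.range g) := by
  simp only [Ideal.ofList, List.mem_ofFn, Set.range]

theorem ofList_take_ofFn {R : Type*} [Semiring R] {n : ℕ} (g : Fin n → R) (i : ℕ) :
    Ideal.ofList ((List.ofFn g).take i) = Ideal.span (g '' {j | (j : ℕ) < i}) := by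
  refine congrArg Ideal.span (Set.ext fun x => ?_)
  simp only [Set.mem_ofPred_eq, List.mem_take_iff_getElem, List.getElem_ofFn, List.length_ofFn,
    lt_min_iff, Set.mem_image]
  constructor
  · rintro ⟨j, hj, rfl⟩
    exact ⟨⟨j, hj.2⟩, hj.1, rfl⟩
  · rintro ⟨j, hj, rfl⟩
    exact ⟨j, ⟨hj, j.2⟩, rfl⟩

theorem isWeaklyRegular_ofFn_X (R : Type*) [CommRing R] (n : ℕ) :
    IsWeaklyRegular (MvPolynomial (Fin n) R) (List.ofFn (X : Fin n → MvPolynomial (Fin n) R)) := by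
  rw [isWeaklyRegular_iff]
  intro i hi
  rw [List.getElem_ofFn, isSMulRegular_iff_right_eq_zero_of_smul]
  intro p hp
  obtain ⟨p, rfl⟩ := Submodule.Quotient.mk_surjective _ p
  rw [← Submodule.Quotient.mk_smul] at hp
  simp only [Submodule.Quotient.mk_eq_zero, smul_eq_mul, Ideal.mul_top, ofList_take_ofFn,
    mem_ideal_span_X_image] at hp ⊢
  intro m hm
  obtain ⟨j, hji, hj⟩ := hp (Finsupp.single ⟨i, by simpa using hi⟩ 1 + m) (by
    rwa [mem_support_iff, coeff_X_mul, ← mem_support_iff])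
  have hne : i ≠ j := Nat.ne_of_gt hji
  exact ⟨j, hji, by simpa [Finsupp.single_apply, Fin.ext_iff, hne] using hj⟩

theorem isWeaklyRegular_ofFn_of_algebraicIndependent_of_flat {A R : Type*} [CommRing A]
    [CommRing R] [Algebra A R] {n : ℕ} {f : Fin n → R} (hf : AlgebraicIndependent A f)
    [Module.Flat (Algebra.adjoin A (Set.range f)) R] : IsWeaklyRegular R (List.ofFn f) := by
  let _ : Algebra (MvPolynomial (Fin n) A) (Algebra.adjoin A (Set.range f)) :=
    hf.aevalEquiv.toAlgHom.toAlgebra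
  let _ : Algebra (MvPolynomial (Fin n) A) R := (aeval f).toAlgebra
  have : IsScalarTower (MvPolynomial (Fin n) A) (Algebra.adjoin A (Set.range f)) R :=
    .of_algebraMap_eq fun p => (hf.algebraMap_aevalEquiv p).symm
  have : Module.Flat (MvPolynomial (Fin n) A) (Algebra.adjoin A (Set.range f)) :=
    RingHom.Flat.of_bijective hf.aevalEquiv.bijective
  have : Module.Flat (MvPolynomial (Fin n) A) R :=
    .trans _ (Algebra.adjoin A (Set.range f)) _
  have hX := (isWeaklyRegular_ofFn_X A n).of_flat (S := R)
  rw [List.map_ofFn] at hX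
  convert hX using 2
  exact funext fun i => (aeval_X f i).symm

theorem isWeaklyRegular_of_retract {T M N : Type*} [CommRing T] [AddCommGroup M] [Module T M]
    [AddCommGroup N] [Module T N] {rs : List T} (i : N →ₗ[T] M) (r : M →ₗ[T] N)
    (hri : r ∘ₗ i = LinearMap.id) (h : IsWeaklyRegular M rs) : IsWeaklyRegular N rs := by
  induction rs generalizing M N with
  | nil => exact .nil T N
  | cons a rs ih =>
    rw [isWeaklyRegular_cons_iff] at h ⊢
    have hi : Function.Injective i := Function.LeftInverse.injective (LinearMap.congr_fun hri)
    refine ⟨h.1.of_injective i hi, ih (QuotSMulTop.map a i) (QuotSMulTop.map a r) ?_ h.2⟩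
    rw [← QuotSMulTop.map_comp, hri, QuotSMulTop.map_id]

theorem finite_quotient_of_surjective (F : Type*) {T R : Type*} [CommRing F] [CommRing T]
    [CommRing R] [Algebra T R] [Algebra F T] [Algebra F R] [IsScalarTower F T R] {r : R →ₗ[T] T}
    (hr : Function.Surjective r) (I : Ideal T)
    [Module.Finite F (R ⧸ I.map (algebraMap T R))] : Module.Finite F (T ⧸ I) := by
  have hle : (I.map (algebraMap T R)).restrictScalars T ≤ Submodule.comap r I := by
    rw [← Ideal.smul_top_eq_map, ← Submodule.map_le_iff_le_comap, Submodule.map_smul'']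
    exact Submodule.smul_le.2 fun a ha b _ => I.mul_mem_right b ha
  let rI := Submodule.mapQ _ I r hle
  have hrI : Function.Surjective rI := by
    rintro ⟨t⟩
    obtain ⟨x, rfl⟩ := hr t
    exact ⟨Submodule.Quotient.mk x, rfl⟩
  exact .of_surjective ((rI ∘ₗ (Submodule.Quotient.restrictScalarsEquiv T
    (I.map (algebraMap T R))).symm.toLinearMap).restrictScalars F)
    (hrI.comp (LinearEquiv.surjective _))

theorem ringKrullDim_le_of_isIntegral (A R : Type*) [CommRing A] [CommRing R] [Algebra A R]
    [Algebra.IsIntegral A R] : ringKrullDim R ≤ ringKrullDim A :=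
  Order.krullDim_le_of_strictMono (PrimeSpectrum.comap (algebraMap A R))
    fun _ _ hPQ => Ideal.IsIntegral.comap_lt_comap (R := A) hPQ

theorem isSMulRegular_iff_mem_nonZeroDivisors_quotient {R : Type*} [CommRing R] (I : Ideal R)
    (a : R) : IsSMulRegular (R ⧸ I) a ↔ Ideal.Quotient.mk I a ∈ nonZeroDivisors (R ⧸ I) := by
  rw [isSMulRegular_iff_right_eq_zero_of_smul, mem_nonZeroDivisors_iff_right]
  simp only [Algebra.smul_def, mul_comm]
  rfl

theorem ringKrullDim_quotient_ofList_add_length_le {R : Type*} [CommRing R] {rs : List R}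
    (h : IsWeaklyRegular R rs) :
    ringKrullDim (R ⧸ Ideal.ofList rs) + rs.length ≤ ringKrullDim R := by
  induction rs using List.reverseRecOn with
  | nil => simpa using ringKrullDim_quotient_le (Ideal.ofList ([] : List R))
  | append_singleton rs a ih =>
    rw [isWeaklyRegular_append_iff, isWeaklyRegular_singleton_iff, smul_eq_mul, Ideal.mul_top] at h
    have hle : Ideal.ofList rs ≤ Ideal.ofList (rs ++ [a]) := by
      rw [Ideal.ofList_append]
      exact le_sup_left
    have ha : a ∈ Ideal.ofList (rs ++ [a]) := Ideal.subset_span (by simp)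
    have hstep : ringKrullDim (R ⧸ Ideal.ofList (rs ++ [a])) + 1 ≤
        ringKrullDim (R ⧸ Ideal.ofList rs) :=
      ringKrullDim_succ_le_of_surjective (Ideal.Quotient.factor hle)
        (Ideal.Quotient.factor_surjective hle)
        ((isSMulRegular_iff_mem_nonZeroDivisors_quotient _ a).1 h.2)
        (Ideal.Quotient.eq_zero_iff_mem.2 ha)
    calc ringKrullDim (R ⧸ Ideal.ofList (rs ++ [a])) + (rs ++ [a]).length
        = ringKrullDim (R ⧸ Ideal.ofList (rs ++ [a])) + 1 + rs.length := by
          rw [List.length_append, List.length_singleton, Nat.cast_add, Nat.cast_one, add_assoc,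
            add_comm (1 : WithBot ℕ∞)]
      _ ≤ ringKrullDim (R ⧸ Ideal.ofList rs) + rs.length := by gcongr
      _ ≤ ringKrullDim R := ih h.1

theorem finite_quotient_ofList_of_ringKrullDim_le (F : Type*) {R : Type*} [Field F] [CommRing R]
    [Algebra F R] [Algebra.FiniteType F R] {rs : List R} (h : IsWeaklyRegular R rs)
    (hdim : ringKrullDim R ≤ rs.length) : Module.Finite F (R ⧸ Ideal.ofList rs) := by
  rw [Module.finite_iff_krullDimLE_zero, Ring.krullDimLE_iff]
  have hle := (ringKrullDim_quotient_ofList_add_length_le h).trans hdim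
  exact ENat.WithBot.add_le_add_natCast_right_iff.1 (hle.trans_eq (zero_add _).symm)

theorem ringKrullDim_le_of_isIntegral_adjoin {F R : Type*} [Field F] [CommRing R] [Algebra F R]
    {n : ℕ} (f : Fin n → R) [Algebra.IsIntegral (Algebra.adjoin F (Set.range f)) R] :
    ringKrullDim R ≤ n := by
  have hsurj : Function.Surjective (aeval (R := F) f).rangeRestrict :=
    (aeval (R := F) f).rangeRestrict_surjective
  calc ringKrullDim R
      ≤ ringKrullDim (Algebra.adjoin F (Set.range f)) := ringKrullDim_le_of_isIntegral _ R
    _ ≤ ringKrullDim (MvPolynomial (Fin n) F) := by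
      rw [Algebra.adjoin_range_eq_range_aeval]
      exact ringKrullDim_le_of_surjective _ hsurj
    _ = n := by simp [MvPolynomial.ringKrullDim_of_isNoetherianRing]

end RegularSequences

section Independence

open scoped Pointwise

variable {A B M ι : Type*} [CommRing A] [CommRing B] [AddCommGroup M] [Module A M] [Fintype ι]
  {φ : B →+* A} {x : A} {b : ι → M}

theorem sum_eval₂_smul_eq_smul_sum_divX_add (q : ι → Polynomial B) :
    ∑ i, (q i).eval₂ φ x • b i =
      x • ∑ i, (q i).divX.eval₂ φ x • b i + ∑ i, φ ((q i).coeff 0) • b i := by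
  rw [Finset.smul_sum, ← Finset.sum_add_distrib]
  refine Finset.sum_congr rfl fun i _ => ?_
  conv_lhs => rw [← Polynomial.divX_mul_X_add (q i)]
  rw [Polynomial.eval₂_add, Polynomial.eval₂_mul, Polynomial.eval₂_X, Polynomial.eval₂_C,
    add_smul, mul_comm, mul_smul]

theorem coeff_zero_eq_zero_of_sum_eval₂_smul_eq_zero
    (hb : ∀ c : ι → B, ∑ i, φ (c i) • (Submodule.Quotient.mk (b i) : QuotSMulTop x M) = 0 → c = 0)
    {q : ι → Polynomial B} (hq : ∑ i, (q i).eval₂ φ x • b i = 0) (i : ι) :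
    (q i).coeff 0 = 0 := by
  suffices (fun i => (q i).coeff 0) = 0 from congrFun this i
  apply hb
  have hmk := congrArg (Submodule.mkQ (x • ⊤ : Submodule A M)) hq
  have hmem := Submodule.smul_mem_pointwise_smul
    (∑ i, (q i).divX.eval₂ φ x • b i) x (⊤ : Submodule A M) trivial
  rwa [sum_eval₂_smul_eq_smul_sum_divX_add, map_add, map_sum, Submodule.mkQ_apply,
    (Submodule.Quotient.mk_eq_zero _).2 hmem, zero_add, map_zero] at hmk

theorem eq_zero_of_sum_eval₂_smul_eq_zero (hx : IsSMulRegular M x)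
    (hb : ∀ c : ι → B, ∑ i, φ (c i) • (Submodule.Quotient.mk (b i) : QuotSMulTop x M) = 0 → c = 0)
    {q : ι → Polynomial B} (hq : ∑ i, (q i).eval₂ φ x • b i = 0) : q = 0 := by
  suffices hdegree : ∀ (N : ℕ) (q : ι → Polynomial B), (∀ i, (q i).natDegree ≤ N) →
      ∑ i, (q i).eval₂ φ x • b i = 0 → q = 0 from
    hdegree _ q (fun i => Finset.le_sup (f := fun i => (q i).natDegree) (Finset.mem_univ i)) hq
  intro N
  induction N with
  | zero =>
    intro q hN hq
    funext i
    rw [Polynomial.eq_C_of_natDegree_le_zero (hN i),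
      coeff_zero_eq_zero_of_sum_eval₂_smul_eq_zero hb hq i, map_zero, Pi.zero_apply]
  | succ N ih =>
    intro q hN hq
    have hcoeff := coeff_zero_eq_zero_of_sum_eval₂_smul_eq_zero hb hq
    have hdivX : (fun i => (q i).divX) = 0 := by
      refine ih _ (fun i => ?_) (hx.right_eq_zero_of_smul ?_)
      · rw [Polynomial.natDegree_divX_eq_natDegree_tsub_one]
        exact Nat.sub_le_of_le_add (hN i)
      · rw [sum_eval₂_smul_eq_smul_sum_divX_add] at hq
        simpa [hcoeff] using hq
    funext i
    rw [← Polynomial.divX_mul_X_add (q i), hcoeff i, congrFun hdivX i]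
    simp

theorem aeval_eq_eval₂_finSuccEquiv {k : ℕ} [Algebra B A] (g : Fin (k + 1) → A)
    (q : MvPolynomial (Fin (k + 1)) B) :
    aeval g q = (finSuccEquiv B k q).eval₂
      (aeval (R := B) fun i : Fin k => g i.succ).toRingHom (g 0) := by
  induction q using MvPolynomial.induction_on with
  | C a => simp [finSuccEquiv_apply]
  | add p q hp hq => rw [map_add, map_add, hp, hq, Polynomial.eval₂_add]
  | mul_X p i hp =>
    rw [map_mul, map_mul, hp, Polynomial.eval₂_mul]
    cases i using Fin.cases <;> simp [finSuccEquiv_X_zero, finSuccEquiv_X_succ]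

theorem eq_zero_of_sum_aeval_smul_eq_zero [Algebra B A] {k : ℕ} {g : Fin k → A}
    (hg : IsWeaklyRegular M (List.ofFn g))
    (hb : ∀ c : ι → B, ∑ i, algebraMap B A (c i) •
      (Submodule.Quotient.mk (b i) : M ⧸ (Ideal.ofList (List.ofFn g) • ⊤ : Submodule A M)) = 0 →
      c = 0)
    {p : ι → MvPolynomial (Fin k) B} (hp : ∑ i, aeval g (p i) • b i = 0) : p = 0 := by
  induction k generalizing M with
  | zero =>
    have hC (i : ι) : p i = C (coeff 0 (p i)) := eq_C_of_isEmpty _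
    have hcoeff : (fun i => coeff 0 (p i)) = 0 := hb _ (by
      have hmk := congrArg (Submodule.mkQ (Ideal.ofList (List.ofFn g) • ⊤ : Submodule A M)) hp
      rw [map_sum, map_zero] at hmk
      rw [← hmk]
      refine Finset.sum_congr rfl fun i _ => ?_
      rw [hC i, aeval_C, map_smul, coeff_zero_C]
      rfl)
    funext i
    rw [hC i, congrFun hcoeff i]
    exact map_zero C
  | succ k ih =>
    rw [List.ofFn_succ, isWeaklyRegular_cons_iff] at hg
    simp only [aeval_eq_eval₂_finSuccEquiv] at hp
    have hzero := eq_zero_of_sum_eval₂_smul_eq_zero hg.1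
      (fun c hc => ih hg.2 (fun c hc => hb c ?_) hc) hp
    · exact funext fun i => (map_eq_zero_iff _ (finSuccEquiv B k).injective).1 (congrFun hzero i)
    · rw [List.ofFn_succ]
      apply (Submodule.quotOfListConsSMulTopEquivQuotSMulTopInner M (g 0) _).injective
      rw [map_sum, map_zero, ← hc]
      simp only [map_smul]
      rfl

end Independence

/-- A homogeneous element of positive degree with respect to the family `𝒜` of graded pieces;
the degree is existentially quantified, so `0` qualifies. -/
def IsHomogeneousOfPosDegree {R σ : Type*} [SetLike σ R] (𝒜 : ℕ → σ) (r : R) : Prop :=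
  ∃ d, 0 < d ∧ r ∈ 𝒜 d

section PrimeAvoidance

variable {R σ : Type*} [CommRing R] [SetLike σ R] [AddSubmonoidClass σ R] {𝒜 : ℕ → σ}
  [GradedRing 𝒜]

theorem exists_homogeneous_mem_notMem_of_not_le {I J : Ideal R} (hI : I.IsHomogeneous 𝒜)
    (hIJ : ¬ I ≤ J) : ∃ d, ∃ v ∈ 𝒜 d, v ∈ I ∧ v ∉ J := by
  classical
  obtain ⟨x, hxI, hxJ⟩ := SetLike.not_le_iff_exists.1 hIJ
  by_contra! hcomponents
  refine hxJ ?_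
  rw [← DirectSum.sum_support_decompose 𝒜 x]
  exact sum_mem fun d _ => hcomponents d _ (SetLike.coe_mem _) (hI d hxI)

theorem exists_isHomogeneousOfPosDegree_notMem_of_erase [DecidableEq (Ideal R)]
    {s : Finset (Ideal R)} (hprime : ∀ P ∈ s, P.IsPrime) (hhom : ∀ P ∈ s, P.IsHomogeneous 𝒜)
    {Q : Ideal R} (hQ : Minimal (· ∈ s) Q) {a t : R} (ha : IsHomogeneousOfPosDegree 𝒜 a)
    (haQ : a ∉ Q) (ht : IsHomogeneousOfPosDegree 𝒜 t) (hts : ∀ P ∈ s.erase Q, t ∉ P) :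
    ∃ w, IsHomogeneousOfPosDegree 𝒜 w ∧ ∀ P ∈ s, w ∉ P := by
  by_cases htQ : t ∈ Q
  swap
  · refine ⟨t, ht, fun P hP => ?_⟩
    obtain rfl | hne := eq_or_ne P Q
    · exact htQ
    · exact hts P (Finset.mem_erase.2 ⟨hne, hP⟩)
  have := hprime Q hQ.1
  have hinf_hom : ((s.erase Q).inf id).IsHomogeneous 𝒜 :=
    Finset.inf_induction (p := fun I : Ideal R => I.IsHomogeneous 𝒜) (Ideal.IsHomogeneous.top 𝒜)
      (fun _ h₁ _ h₂ => h₁.inf h₂) fun P hP => hhom P (Finset.mem_of_mem_erase hP)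
  have hinf_not_le : ¬ (s.erase Q).inf id ≤ Q := fun hle => by
    obtain ⟨P, hP, hPQ⟩ := (Ideal.IsPrime.inf_le' this).1 hle
    exact Finset.ne_of_mem_erase hP (hQ.eq_of_le (Finset.mem_of_mem_erase hP) hPQ)
  obtain ⟨k, v, hv, hvinf, hvQ⟩ := exists_homogeneous_mem_notMem_of_not_le hinf_hom hinf_not_le
  obtain ⟨e, he, hta⟩ := ht
  obtain ⟨d, hd, had⟩ := ha
  have hav : a * v ∈ 𝒜 (d + k) := SetLike.mul_mem_graded had hv
  -- `t` avoids all primes but `Q`, and `a * v` lies in all of them but avoids `Q`.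
  refine ⟨t ^ (d + k) + (a * v) ^ e, ⟨(d + k) * e, by positivity, add_mem ?_ ?_⟩, fun P hP hw => ?_⟩
  · exact SetLike.pow_mem_graded _ hta
  · rw [mul_comm]
    exact SetLike.pow_mem_graded _ hav
  · have hPprime := hprime P hP
    obtain rfl | hne := eq_or_ne P Q
    · rw [Ideal.add_mem_iff_right _ (Ideal.pow_mem_of_mem _ htQ _ (by positivity))] at hw
      exact (hPprime.mem_or_mem (hPprime.mem_of_pow_mem _ hw)).elim haQ hvQ
    · have hPerase := Finset.mem_erase.2 ⟨hne, hP⟩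
      have hvP : v ∈ P := (Submodule.mem_finsetInf.1 hvinf) P hPerase
      rw [Ideal.add_mem_iff_left _ (Ideal.pow_mem_of_mem _ (P.mul_mem_left a hvP) _ he)] at hw
      exact hts P hPerase (hPprime.mem_of_pow_mem _ hw)

theorem exists_isHomogeneousOfPosDegree_forall_notMem_of_isHomogeneous {s : Finset (Ideal R)}
    (hprime : ∀ P ∈ s, P.IsPrime) (hhom : ∀ P ∈ s, P.IsHomogeneous 𝒜)
    (h : ∀ P ∈ s, ∃ t, IsHomogeneousOfPosDegree 𝒜 t ∧ t ∉ P) :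
    ∃ t, IsHomogeneousOfPosDegree 𝒜 t ∧ ∀ P ∈ s, t ∉ P := by
  classical
  induction s using Finset.strongInduction with
  | H s ih =>
    obtain rfl | hne := s.eq_empty_or_nonempty
    · exact ⟨0, ⟨1, one_pos, zero_mem _⟩, by simp⟩
    obtain ⟨Q, hQ⟩ := s.exists_minimal hne
    obtain ⟨a, ha, haQ⟩ := h Q hQ.1
    have hsub {P : Ideal R} (hP : P ∈ s.erase Q) : P ∈ s := Finset.mem_of_mem_erase hP
    obtain ⟨t, ht, hts⟩ := ih (s.erase Q) (Finset.erase_ssubset hQ.1)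
      (fun P hP => hprime P (hsub hP)) (fun P hP => hhom P (hsub hP)) fun P hP => h P (hsub hP)
    exact exists_isHomogeneousOfPosDegree_notMem_of_erase hprime hhom hQ ha haQ ht hts

theorem exists_isHomogeneousOfPosDegree_forall_notMem {s : Finset (Ideal R)}
    (hprime : ∀ P ∈ s, P.IsPrime) (h : ∀ P ∈ s, ∃ t, IsHomogeneousOfPosDegree 𝒜 t ∧ t ∉ P) :
    ∃ t, IsHomogeneousOfPosDegree 𝒜 t ∧ ∀ P ∈ s, t ∉ P := by
  classical
  let core (P : Ideal R) : Ideal R := (P.homogeneousCore 𝒜).toIdeal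
  obtain ⟨t, ⟨d, hd, htd⟩, htcore⟩ :=
    exists_isHomogeneousOfPosDegree_forall_notMem_of_isHomogeneous (𝒜 := 𝒜) (s := s.image core)
      (by
        simp only [Finset.forall_mem_image]
        exact fun P hP => (hprime P hP).homogeneousCore)
      (by
        simp only [Finset.forall_mem_image]
        exact fun P _ => (P.homogeneousCore 𝒜).isHomogeneous)
      (by
        simp only [Finset.forall_mem_image]
        intro P hP
        obtain ⟨t, ht, htP⟩ := h P hP
        exact ⟨t, ht, fun htcore => htP (Ideal.toIdeal_homogeneousCore_le 𝒜 P htcore)⟩)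
  exact ⟨t, ⟨d, hd, htd⟩, fun P hP htP => htcore (core P) (Finset.mem_image_of_mem _ hP)
    (Ideal.mem_homogeneousCore_of_homogeneous_of_mem ⟨d, htd⟩ htP)⟩

end PrimeAvoidance

section Permutation

open scoped Pointwise

variable {R σ : Type*} [CommRing R] [SetLike σ R] [AddSubmonoidClass σ R] {𝒜 : ℕ → σ}
  [GradedRing 𝒜]

theorem isHomogeneous_ofList {rs : List R} (hrs : ∀ r ∈ rs, IsHomogeneousOfPosDegree 𝒜 r) :
    (Ideal.ofList rs).IsHomogeneous 𝒜 :=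
  Ideal.homogeneous_span 𝒜 _ fun r hr => let ⟨d, _, hd⟩ := hrs r hr; ⟨d, hd⟩

theorem eq_bot_of_le_pointwise_smul_of_isHomogeneous {I : Ideal R} (hI : I.IsHomogeneous 𝒜) {a : R}
    (ha : IsHomogeneousOfPosDegree 𝒜 a) {K : Submodule R (R ⧸ I)} (hK : K ≤ a • K) : K = ⊥ := by
  have hdivisible (k : ℕ) : ∀ x ∈ K, ∃ y, x = a ^ k • y := by
    induction k with
    | zero => exact fun x _ => ⟨x, by rw [pow_zero, one_smul]⟩
    | succ k ih =>
      intro x hx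
      obtain ⟨z, hz, rfl⟩ := hK hx
      obtain ⟨y, rfl⟩ := ih z hz
      exact ⟨y, by rw [pow_succ', mul_smul]; rfl⟩
  obtain ⟨e, he, hae⟩ := ha
  refine (Submodule.eq_bot_iff K).2 fun x hx => ?_
  obtain ⟨x, rfl⟩ := Ideal.Quotient.mk_surjective x
  refine Ideal.Quotient.eq_zero_iff_mem.2 ((hI.mem_iff 𝒜).2 fun d => ?_)
  -- Modulo `I`, the element `x` is a multiple of `a ^ (d + 1)`, which has degree beyond `d`.
  obtain ⟨y, hy⟩ := hdivisible (d + 1) _ hx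
  obtain ⟨y, rfl⟩ := Ideal.Quotient.mk_surjective y
  have hmem : x - a ^ (d + 1) * y ∈ I := Ideal.Quotient.eq.1 hy
  have hd : ¬ (d + 1) • e ≤ d := by
    rw [smul_eq_mul, not_le]
    exact Nat.lt_of_lt_of_le d.lt_succ_self (Nat.le_mul_of_pos_right _ he)
  have hcomponent : GradedRing.proj 𝒜 d (x - a ^ (d + 1) * y) ∈ I := hI d hmem
  rwa [map_sub, GradedRing.proj_apply, GradedRing.proj_apply,
    DirectSum.coe_decompose_mul_of_left_mem_of_not_le 𝒜 (SetLike.pow_mem_graded _ hae) hd,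
    sub_zero] at hcomponent

theorem isWeaklyRegular_of_perm {rs rs' : List R}
    (hrs : ∀ r ∈ rs, IsHomogeneousOfPosDegree 𝒜 r) (hreg : IsWeaklyRegular R rs)
    (hperm : rs.Perm rs') : IsWeaklyRegular R rs' := by
  refine hreg.prototype_perm hperm fun a b ts hsub => ?_
  have hhom (r : R) (hr : r ∈ a :: b :: ts) : IsHomogeneousOfPosDegree 𝒜 r := hrs r (hsub.subset hr)
  refine fun hK => eq_bot_of_le_pointwise_smul_of_isHomogeneous (𝒜 := 𝒜) ?_ (hhom a (by simp)) hK.le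
  rw [smul_eq_mul, Ideal.mul_top]
  exact isHomogeneous_ofList fun r hr => hhom r (by simp [hr])

end Permutation

section Exchange

variable {R T σ τ : Type*} [CommRing R] [CommRing T] [Algebra T R] [Algebra.IsIntegral T R]
  [SetLike σ R] [AddSubmonoidClass σ R] {𝒜 : ℕ → σ} [GradedRing 𝒜]
  [SetLike τ T] [AddSubmonoidClass τ T] {ℬ : ℕ → τ} [GradedRing ℬ]

theorem exists_isHomogeneousOfPosDegree_algebraMap_notMem
    (hℬ : ∀ d, ∀ t ∈ ℬ d, algebraMap T R t ∈ 𝒜 d) {P : Ideal R} [hP : P.IsPrime] {f : R}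
    (hf : IsHomogeneousOfPosDegree 𝒜 f) (hfP : f ∉ P) :
    ∃ t, IsHomogeneousOfPosDegree ℬ t ∧ algebraMap T R t ∉ P := by
  by_contra! hmem
  have hcomponent {k : ℕ} (hk : 0 < k) (t : T) :
      (DirectSum.decompose 𝒜 (algebraMap T R t) k : R) ∈ P := by
    let φ : ℬ →+*ᵍ 𝒜 := ⟨algebraMap T R, hℬ _ _⟩
    rw [show algebraMap T R t = φ t from rfl, ← φ.map_directSumDecompose]
    exact hmem _ ⟨k, hk, SetLike.coe_mem _⟩
  obtain ⟨e, he, hfe⟩ := hf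
  have hfpow (i : ℕ) : f ^ i ∈ 𝒜 (i * e) := SetLike.pow_mem_graded i hfe
  obtain ⟨p, hp, hpf⟩ := Algebra.IsIntegral.isIntegral (R := T) f
  -- The degree `N * e` part of the integral equation of degree `N` expresses `f ^ N` through the
  -- positive-degree parts of its coefficients.
  have hpow := congrArg (GradedRing.proj 𝒜 (p.natDegree * e)) hpf
  rw [Polynomial.eval₂_eq_sum_range, Finset.sum_range_succ, hp.coeff_natDegree, map_one, one_mul,
    map_add, map_zero, GradedRing.proj_apply _ _ (f ^ _),
    DirectSum.decompose_of_mem_same 𝒜 (hfpow _), map_sum] at hpow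
  refine hfP (hP.mem_of_pow_mem p.natDegree ?_)
  rw [eq_neg_of_add_eq_zero_right hpow]
  refine neg_mem (sum_mem fun i hi => ?_)
  have hlt : i * e < p.natDegree * e := Nat.mul_lt_mul_of_pos_right (Finset.mem_range.1 hi) he
  rw [GradedRing.proj_apply,
    DirectSum.coe_decompose_mul_of_right_mem_of_le 𝒜 (hfpow i) hlt.le]
  exact P.mul_mem_right _ (hcomponent (Nat.sub_pos_of_lt hlt) _)

theorem exists_isHomogeneousOfPosDegree_isSMulRegular [IsNoetherianRing R]
    (hℬ : ∀ d, ∀ t ∈ ℬ d, algebraMap T R t ∈ 𝒜 d) (M : Type*) [AddCommGroup M] [Module R M]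
    [Module.Finite R M] {f : R} (hf : IsHomogeneousOfPosDegree 𝒜 f) (hfM : IsSMulRegular M f) :
    ∃ t, IsHomogeneousOfPosDegree ℬ t ∧ IsSMulRegular M (algebraMap T R t) := by
  classical
  have hregular (r : R) : IsSMulRegular M r ↔ ∀ P ∈ associatedPrimes R M, r ∉ P := by
    simpa using (Set.ext_iff.1 (biUnion_associatedPrimes_eq_compl_regular R M) r).not.symm
  have hfinite := associatedPrimes.finite R M
  obtain ⟨t, ht, htP⟩ := exists_isHomogeneousOfPosDegree_forall_notMem (𝒜 := ℬ)
    (s := hfinite.toFinset.image (Ideal.comap (algebraMap T R)))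
    (by
      simp only [Finset.forall_mem_image, hfinite.mem_toFinset]
      exact fun P hP => hP.1.comap _)
    (by
      simp only [Finset.forall_mem_image, hfinite.mem_toFinset]
      intro P hP
      have := hP.1
      exact exists_isHomogeneousOfPosDegree_algebraMap_notMem hℬ hf ((hregular f).1 hfM P hP))
  exact ⟨t, ht, (hregular _).2 fun P hP =>
    htP _ (Finset.mem_image_of_mem _ (hfinite.mem_toFinset.2 hP))⟩

theorem exists_isWeaklyRegular_map_algebraMap [IsNoetherianRing R]
    (hℬ : ∀ d, ∀ t ∈ ℬ d, algebraMap T R t ∈ 𝒜 d) (gs : List T) (fs : List R)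
    (hgs : ∀ t ∈ gs, IsHomogeneousOfPosDegree ℬ t) (hfs : ∀ r ∈ fs, IsHomogeneousOfPosDegree 𝒜 r)
    (hreg : IsWeaklyRegular R (gs.map (algebraMap T R) ++ fs)) :
    ∃ gs' : List T, gs'.length = gs.length + fs.length ∧
      (∀ t ∈ gs', IsHomogeneousOfPosDegree ℬ t) ∧
      IsWeaklyRegular R (gs'.map (algebraMap T R)) := by
  induction fs generalizing gs with
  | nil => exact ⟨gs, rfl, hgs, by simpa using hreg⟩
  | cons f fs ih =>
    obtain ⟨hf, hfs⟩ := List.forall_mem_cons.1 hfs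
    have halgebraMap {t : T} (ht : IsHomogeneousOfPosDegree ℬ t) :
        IsHomogeneousOfPosDegree 𝒜 (algebraMap T R t) :=
      ht.imp fun d hd => ⟨hd.1, hℬ d t hd.2⟩
    have hmem (r : R) (hr : r ∈ gs.map (algebraMap T R) ++ fs) : IsHomogeneousOfPosDegree 𝒜 r := by
      obtain hr | hr := List.mem_append.1 hr
      · obtain ⟨t, ht, rfl⟩ := List.mem_map.1 hr
        exact halgebraMap (hgs t ht)
      · exact hfs r hr
    have hlast := isWeaklyRegular_of_perm (𝒜 := 𝒜) (by simpa [hf, or_imp, forall_and] using hmem)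
      hreg (List.perm_middle.trans (List.perm_append_singleton _ _).symm)
    rw [isWeaklyRegular_append_iff, isWeaklyRegular_singleton_iff] at hlast
    obtain ⟨t, ht, htreg⟩ := exists_isHomogeneousOfPosDegree_isSMulRegular hℬ _ hf hlast.2
    have hexchanged := (isWeaklyRegular_append_iff _ _ [algebraMap T R t]).2
      ⟨hlast.1, (isWeaklyRegular_singleton_iff _ _).2 htreg⟩
    have hfirst := isWeaklyRegular_of_perm (𝒜 := 𝒜)
      (by simpa [halgebraMap ht, or_imp, forall_and] using hmem)
      hexchanged (List.perm_append_singleton _ _)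
    obtain ⟨gs', hlength, hgs', hreg'⟩ := ih (t :: gs) (List.forall_mem_cons.2 ⟨ht, hgs⟩) hfs hfirst
    exact ⟨gs', by rw [hlength, List.length_cons, List.length_cons]; omega, hgs', hreg'⟩

end Exchange

section RegularSequenceIndependence

variable {F R : Type*} [CommRing R] {n : ℕ} {g : Fin n → R}

theorem eq_zero_of_sum_aeval_mul_eq_zero [CommRing F] [Algebra F R] {κ : Type*} [Fintype κ]
    {B : κ → R} (hg : IsWeaklyRegular R (List.ofFn g))
    (hB : LinearIndependent F fun i => Ideal.Quotient.mk (Ideal.span (Set.range g)) (B i))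
    {p : κ → MvPolynomial (Fin n) F} (hp : ∑ i, aeval g (p i) * B i = 0) : p = 0 := by
  refine eq_zero_of_sum_aeval_smul_eq_zero hg (fun c hc => ?_) hp
  refine funext (Fintype.linearIndependent_iff.1 hB c ?_)
  have hmem : ∑ i, c i • B i ∈ Ideal.span (Set.range g) := by
    have hzero : Submodule.mkQ (Ideal.ofList (List.ofFn g) • ⊤ : Ideal R) (∑ i, c i • B i) = 0 := by
      simpa only [map_sum, ← algebraMap_smul R (c _) (B _), map_smul, Submodule.mkQ_apply] using hc
    rwa [Submodule.mkQ_apply, Submodule.Quotient.mk_eq_zero, smul_eq_mul, Ideal.mul_top,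
      ofList_ofFn] at hzero
  rw [← Ideal.Quotient.eq_zero_iff_mem, map_sum] at hmem
  simpa only [← Ideal.Quotient.mkₐ_eq_mk F, map_smul] using hmem

theorem linearIndependent_adjoin_of_isWeaklyRegular [CommRing F] [Algebra F R] {κ : Type*}
    [Finite κ] {B : κ → R} (hg : IsWeaklyRegular R (List.ofFn g))
    (hB : LinearIndependent F fun i => Ideal.Quotient.mk (Ideal.span (Set.range g)) (B i)) :
    LinearIndependent (Algebra.adjoin F (Set.range g)) B := by
  cases nonempty_fintype κ
  rw [Fintype.linearIndependent_iff]
  intro c hc i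
  have hpolynomial (i : κ) : ∃ p : MvPolynomial (Fin n) F, aeval g p = (c i : R) :=
    (Algebra.adjoin_range_eq_range_aeval F g).le (c i).2
  choose p hp using hpolynomial
  have hzero : p = 0 := eq_zero_of_sum_aeval_mul_eq_zero hg hB (by simp only [hp]; exact hc)
  exact Subtype.ext (by rw [← hp, hzero, Pi.zero_apply, map_zero, ZeroMemClass.coe_zero])

theorem algebraicIndependent_of_isWeaklyRegular [Field F] [Algebra F R]
    (hg : IsWeaklyRegular R (List.ofFn g)) (hne : Ideal.span (Set.range g) ≠ ⊤) :
    AlgebraicIndependent F g := by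
  have := Ideal.Quotient.nontrivial_iff.2 hne
  have hone : LinearIndependent F
      fun _ : Unit => Ideal.Quotient.mk (Ideal.span (Set.range g)) (1 : R) :=
    .of_subsingleton () (by rw [map_one]; exact one_ne_zero)
  rw [algebraicIndependent_iff]
  intro p hp
  exact congrFun (eq_zero_of_sum_aeval_mul_eq_zero (p := fun _ => p) hg hone (by simp [hp])) ()

end RegularSequenceIndependence

section GradedNakayama

theorem span_ne_top_of_isHomogeneousOfPosDegree {R σ : Type*} [CommRing R] [Nontrivial R]
    [SetLike σ R] [AddSubmonoidClass σ R] {𝒜 : ℕ → σ} [GradedRing 𝒜] {s : Set R}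
    (hs : ∀ a ∈ s, IsHomogeneousOfPosDegree 𝒜 a) : Ideal.span s ≠ ⊤ := by
  have hle : Ideal.span s ≤ (HomogeneousIdeal.irrelevant 𝒜).toIdeal := by
    refine Ideal.span_le.2 fun a ha => ?_
    obtain ⟨d, hd, had⟩ := hs a ha
    exact DirectSum.decompose_of_mem_ne 𝒜 had hd.ne'
  rw [Ideal.ne_top_iff_one]
  intro hone
  have hproj : GradedRing.proj 𝒜 0 1 = 0 := hle hone
  rw [GradedRing.proj_apply, DirectSum.decompose_of_mem_same 𝒜 SetLike.GradedOne.one_mem] at hproj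
  exact one_ne_zero hproj

variable {F R : Type*} [CommRing R]

theorem proj_mem_span_of_isHomogeneousElem [CommRing F] [Algebra F R] {𝒜 : ℕ → Submodule F R}
    [GradedAlgebra 𝒜] {b : Set R} (hb : ∀ y ∈ b, SetLike.IsHomogeneousElem 𝒜 y) (d : ℕ) {y : R}
    (hy : y ∈ Submodule.span F b) : GradedRing.proj 𝒜 d y ∈ Submodule.span F b := by
  suffices hle : Submodule.span F b ≤ (Submodule.span F b).comap (GradedAlgebra.proj 𝒜 d) from
    hle hy
  refine Submodule.span_le.2 fun z hz => ?_
  obtain ⟨e, hze⟩ := hb z hz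
  change (DirectSum.decompose 𝒜 z d : R) ∈ Submodule.span F b
  obtain rfl | hne := eq_or_ne e d
  · rw [DirectSum.decompose_of_mem_same 𝒜 hze]
    exact Submodule.subset_span hz
  · rw [DirectSum.decompose_of_mem_ne 𝒜 hze hne]
    exact zero_mem _

theorem proj_mem_of_mem_span_of_forall_lt [CommRing F] [Algebra F R] {𝒜 : ℕ → Submodule F R}
    [GradedAlgebra 𝒜] {s : Set R} (hs : ∀ a ∈ s, IsHomogeneousOfPosDegree 𝒜 a)
    {N : Submodule (Algebra.adjoin F s) R} {d : ℕ} (hN : ∀ e < d, ∀ x ∈ 𝒜 e, x ∈ N) {z : R}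
    (hz : z ∈ Ideal.span s) : GradedRing.proj 𝒜 d z ∈ N := by
  rw [← one_mul z]
  generalize (1 : R) = r
  induction hz using Submodule.span_induction generalizing r with
  | mem a ha =>
    obtain ⟨k, hk, hak⟩ := hs a ha
    rw [mul_comm, GradedRing.proj_apply, DirectSum.coe_decompose_mul_of_left_mem 𝒜 d hak]
    split_ifs with hkd
    · exact N.smul_mem ⟨a, Algebra.subset_adjoin ha⟩ (hN (d - k) (by omega) _ (SetLike.coe_mem _))
    · exact N.zero_mem
  | zero => rw [mul_zero, map_zero]; exact N.zero_mem
  | add z w _ _ hz hw => rw [mul_add, map_add]; exact N.add_mem (hz r) (hw r)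
  | smul c z _ hz => rw [smul_eq_mul, ← mul_assoc]; exact hz (r * c)

theorem span_adjoin_eq_top_of_sup_eq_top [CommRing F] [Algebra F R] {𝒜 : ℕ → Submodule F R}
    [GradedAlgebra 𝒜] {s b : Set R} (hs : ∀ a ∈ s, IsHomogeneousOfPosDegree 𝒜 a)
    (hb : ∀ y ∈ b, SetLike.IsHomogeneousElem 𝒜 y)
    (hspan : Submodule.span F b ⊔ (Ideal.span s).restrictScalars F = ⊤) :
    Submodule.span (Algebra.adjoin F s) b = ⊤ := by
  classical
  set N := Submodule.span (Algebra.adjoin F s) b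
  have hhomogeneous (d : ℕ) : ∀ x ∈ 𝒜 d, x ∈ N := by
    induction d using Nat.strong_induction_on with
    | _ d ih =>
      intro x hx
      obtain ⟨y, hy, z, hz, hyz⟩ := Submodule.mem_sup.1 (hspan.ge (Submodule.mem_top (x := x)))
      rw [← DirectSum.decompose_of_mem_same 𝒜 hx, ← GradedRing.proj_apply, ← hyz, map_add]
      exact N.add_mem
        (Submodule.span_subset_span F _ b (proj_mem_span_of_isHomogeneousElem hb d hy))
        (proj_mem_of_mem_span_of_forall_lt hs ih hz)
  refine eq_top_iff.2 fun x _ => ?_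
  rw [← DirectSum.sum_support_decompose 𝒜 x]
  exact sum_mem fun d _ => hhomogeneous d _ (SetLike.coe_mem _)

theorem exists_basis_quotient_of_isHomogeneousElem [Field F] [Algebra F R]
    (𝒜 : ℕ → Submodule F R) [GradedAlgebra 𝒜] (I : Ideal R) :
    ∃ (κ : Set (R ⧸ I)) (b : Module.Basis κ F (R ⧸ I)) (B : κ → R),
      ∀ i, SetLike.IsHomogeneousElem 𝒜 (B i) ∧ Ideal.Quotient.mk I (B i) = b i := by
  classical
  let homogeneousClasses : Set (R ⧸ I) :=
    Ideal.Quotient.mk I '' {x | SetLike.IsHomogeneousElem 𝒜 x}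
  obtain ⟨κ, hκ, hspan, hindep⟩ := exists_linearIndependent F homogeneousClasses
  have htop : ⊤ ≤ Submodule.span F (Set.range ((↑) : κ → R ⧸ I)) := by
    rw [Subtype.range_coe, hspan]
    intro y _
    obtain ⟨x, rfl⟩ := Ideal.Quotient.mk_surjective y
    rw [← DirectSum.sum_support_decompose 𝒜 x, map_sum]
    exact sum_mem fun d _ => Submodule.subset_span ⟨_, ⟨d, SetLike.coe_mem _⟩, rfl⟩
  choose B hB hBκ using fun i : κ => hκ i.2
  exact ⟨κ, .mk hindep htop, B, fun i => ⟨hB i, by rw [Module.Basis.mk_apply, hBκ]⟩⟩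

theorem finite_and_free_adjoin_of_isWeaklyRegular [Field F] [Algebra F R] {𝒜 : ℕ → Submodule F R}
    [GradedAlgebra 𝒜] {n : ℕ} {g : Fin n → R} (hg : ∀ i, IsHomogeneousOfPosDegree 𝒜 (g i))
    (hreg : IsWeaklyRegular R (List.ofFn g))
    [hfin : Module.Finite F (R ⧸ Ideal.span (Set.range g))] :
    Module.Finite (Algebra.adjoin F (Set.range g)) R ∧
      Module.Free (Algebra.adjoin F (Set.range g)) R := by
  set I := Ideal.span (Set.range g)
  obtain ⟨κ, b, B, hB⟩ := exists_basis_quotient_of_isHomogeneousElem 𝒜 I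
  have : Finite κ := Module.Finite.finite_basis b
  have hbB : (fun i => Ideal.Quotient.mk I (B i)) = b := funext fun i => (hB i).2
  have hindep : LinearIndependent (Algebra.adjoin F (Set.range g)) B :=
    linearIndependent_adjoin_of_isWeaklyRegular hreg (hbB ▸ b.linearIndependent)
  have hsup : Submodule.span F (Set.range B) ⊔ I.restrictScalars F = ⊤ := by
    have hmap : (Submodule.span F (Set.range B)).map (Ideal.Quotient.mkₐ F I).toLinearMap = ⊤ := by
      rw [Submodule.map_span, ← Set.range_comp, ← b.span_eq, ← hbB]
      rfl
    have hker : (I.restrictScalars F) = LinearMap.ker (Ideal.Quotient.mkₐ F I).toLinearMap := by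
      ext x
      exact Ideal.Quotient.eq_zero_iff_mem.symm
    rw [hker, ← Submodule.comap_map_eq, hmap, Submodule.comap_top]
  have hspan : Submodule.span (Algebra.adjoin F (Set.range g)) (Set.range B) = ⊤ :=
    span_adjoin_eq_top_of_sup_eq_top (Set.forall_mem_range.2 hg)
      (Set.forall_mem_range.2 fun i => (hB i).1) hsup
  let basis := Module.Basis.mk hindep hspan.ge
  exact ⟨.of_basis basis, .of_basis basis⟩

end GradedNakayama

section Descent

/-- A homogeneous system of parameters of a graded `F`-algebra over whose generated polynomial
subalgebra the algebra is free; its existence is the Cohen-Macaulay property. The number of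
parameters is that of a given index type `Fin n` rather than the Krull dimension of `R`. -/
structure IsFreeHSOP {F R : Type*} [Field F] [CommRing R] [Algebra F R] (𝒜 : ℕ → Submodule F R)
    {n : ℕ} (f : Fin n → R) : Prop where
  algebraicIndependent : AlgebraicIndependent F f
  isHomogeneousOfPosDegree (i : Fin n) : IsHomogeneousOfPosDegree 𝒜 (f i)
  finite : Module.Finite (Algebra.adjoin F (Set.range f)) R
  free : Module.Free (Algebra.adjoin F (Set.range f)) R

variable {F R T : Type*} [Field F] [CommRing R] [Algebra F R] {𝒜 : ℕ → Submodule F R} {n : ℕ}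

theorem IsFreeHSOP.isWeaklyRegular {f : Fin n → R} (hf : IsFreeHSOP 𝒜 f) :
    IsWeaklyRegular R (List.ofFn f) :=
  have := hf.free
  isWeaklyRegular_ofFn_of_algebraicIndependent_of_flat hf.algebraicIndependent

theorem IsFreeHSOP.nontrivial {f : Fin n → R} (hf : IsFreeHSOP 𝒜 f) : Nontrivial R :=
  hf.algebraicIndependent.algebraMap_injective.nontrivial

theorem IsFreeHSOP.finiteType {f : Fin n → R} (hf : IsFreeHSOP 𝒜 f) : Algebra.FiniteType F R :=
  have := hf.finite
  .trans (.adjoin_of_finite (Set.finite_range f)) inferInstance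

theorem IsFreeHSOP.finite_quotient_ofList {f : Fin n → R} (hf : IsFreeHSOP 𝒜 f) {rs : List R}
    (hreg : IsWeaklyRegular R rs) (hlength : rs.length = n) :
    Module.Finite F (R ⧸ Ideal.ofList rs) := by
  have := hf.finite
  have := hf.finiteType
  exact finite_quotient_ofList_of_ringKrullDim_le F hreg
    (hlength ▸ ringKrullDim_le_of_isIntegral_adjoin (F := F) f)

theorem isFreeHSOP_of_isWeaklyRegular [Nontrivial R] [GradedAlgebra 𝒜] {g : Fin n → R}
    (hg : ∀ i, IsHomogeneousOfPosDegree 𝒜 (g i)) (hreg : IsWeaklyRegular R (List.ofFn g))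
    [Module.Finite F (R ⧸ Ideal.span (Set.range g))] : IsFreeHSOP 𝒜 g where
  algebraicIndependent := algebraicIndependent_of_isWeaklyRegular hreg
    (span_ne_top_of_isHomogeneousOfPosDegree (Set.forall_mem_range.2 hg))
  isHomogeneousOfPosDegree := hg
  finite := (finite_and_free_adjoin_of_isWeaklyRegular hg hreg).1
  free := (finite_and_free_adjoin_of_isWeaklyRegular hg hreg).2

theorem exists_isFreeHSOP_of_retraction [CommRing T] [Algebra F T] [Algebra T R]
    [IsScalarTower F T R] [Algebra.IsIntegral T R] {ℬ : ℕ → Submodule F T} [GradedAlgebra 𝒜]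
    [GradedAlgebra ℬ] (hℬ : ∀ d, ∀ t ∈ ℬ d, algebraMap T R t ∈ 𝒜 d) {r : R →ₗ[T] T}
    (hr : r ∘ₗ Algebra.linearMap T R = LinearMap.id) {f : Fin n → R} (hf : IsFreeHSOP 𝒜 f) :
    ∃ g : Fin n → T, IsFreeHSOP ℬ g := by
  have := hf.nontrivial
  have := (algebraMap T R).domain_nontrivial
  have := hf.finiteType
  have := Algebra.FiniteType.isNoetherianRing F R
  obtain ⟨gs, hlength, hgs, hreg⟩ := exists_isWeaklyRegular_map_algebraMap hℬ [] (List.ofFn f)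
    (by simp) (List.forall_mem_ofFn_iff.2 hf.isHomogeneousOfPosDegree) hf.isWeaklyRegular
  obtain rfl : gs.length = n := by simpa using hlength
  have hfinite_map := hf.finite_quotient_ofList hreg (List.length_map _)
  rw [← Ideal.map_ofList] at hfinite_map
  have hfinite : Module.Finite F (T ⧸ Ideal.ofList gs) :=
    finite_quotient_of_surjective F (r := r)
      (Function.RightInverse.surjective (LinearMap.congr_fun hr)) _
  have hregT : IsWeaklyRegular T gs :=
    isWeaklyRegular_of_retract _ r hr ((isWeaklyRegular_map_algebraMap_iff R R gs).1 hreg)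
  rw [← List.ofFn_get gs] at hregT
  rw [← List.ofFn_get gs, ofList_ofFn] at hfinite
  exact ⟨gs.get, isFreeHSOP_of_isWeaklyRegular (fun i => hgs _ (gs.get_mem i)) hregT⟩

end Descent

section HomogeneousSubalgebra

theorem iSupIndep_comap_of_injective {ι A M N : Type*} [Semiring A] [AddCommMonoid M] [Module A M]
    [AddCommMonoid N] [Module A N] {t : ι → Submodule A N} (ht : iSupIndep t) {φ : M →ₗ[A] N}
    (hφ : Function.Injective φ) : iSupIndep fun i => (t i).comap φ := by
  intro i
  have hle : ⨆ (j) (_ : j ≠ i), (t j).comap φ ≤ (⨆ (j) (_ : j ≠ i), t j).comap φ :=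
    iSup₂_le fun j hj => Submodule.comap_mono (le_iSup₂_of_le j hj le_rfl)
  refine Submodule.disjoint_def.2 fun x hx hx' => hφ ?_
  rw [map_zero]
  exact Submodule.disjoint_def.1 (ht i) _ hx (hle hx')

variable {ι F A : Type*} [DecidableEq ι] [AddMonoid ι] [CommRing F] [Ring A] [Algebra F A]
  (𝒜 : ι → Submodule F A) (S : Subalgebra F A)

/-- The graded pieces that a subalgebra `S` inherits from a graded algebra. They grade `S` as soon
as `S` contains the homogeneous components of its elements. -/
abbrev inheritedGrading (i : ι) : Submodule F S :=
  (𝒜 i).comap S.val.toLinearMap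

instance [SetLike.GradedMonoid 𝒜] : SetLike.GradedMonoid (inheritedGrading 𝒜 S) where
  one_mem := SetLike.GradedOne.one_mem (A := 𝒜)
  mul_mem _ _ _ _ ha hb := SetLike.GradedMul.mul_mem (A := 𝒜) ha hb

variable {𝒜 S}

theorem isInternal_inheritedGrading [GradedAlgebra 𝒜]
    (hS : ∀ i, ∀ x ∈ S, GradedRing.proj 𝒜 i x ∈ S) :
    DirectSum.IsInternal (inheritedGrading 𝒜 S) := by
  classical
  refine DirectSum.isInternal_submodule_of_iSupIndep_of_iSup_eq_top
    (iSupIndep_comap_of_injective (DirectSum.Decomposition.isInternal 𝒜).submodule_iSupIndep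
      Subtype.val_injective) (eq_top_iff.2 fun x _ => ?_)
  have hsum : x = ∑ i ∈ (DirectSum.decompose 𝒜 (x : A)).support,
      (⟨GradedRing.proj 𝒜 i x, hS i x x.2⟩ : S) := by
    refine Subtype.ext ?_
    rw [AddSubmonoidClass.coe_finsetSum]
    exact (DirectSum.sum_support_decompose 𝒜 (x : A)).symm
  rw [hsum]
  exact sum_mem fun i _ => Submodule.mem_iSup_of_mem i
    (SetLike.coe_mem (DirectSum.decompose 𝒜 (x : A) i))

end HomogeneousSubalgebra

attribute [local instance] MvPolynomial.gradedAlgebra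

theorem proj_homogeneousSubmodule_apply {σ A : Type*} [CommSemiring A] (d : ℕ)
    (p : MvPolynomial σ A) :
    GradedRing.proj (homogeneousSubmodule σ A) d p = homogeneousComponent d p :=
  decomposition.decompose'_apply p d

section PolynomialSubalgebra

variable {F : Type*} [Field F] {n : ℕ} {T R : Subalgebra F (MvPolynomial (Fin n) F)}

theorem isCM_iff_exists_isFreeHSOP :
    IsCM R ↔ ∃ f : Fin n → R, IsFreeHSOP (inheritedGrading (homogeneousSubmodule (Fin n) F) R) f :=
  exists_congr fun _ => ⟨fun h => ⟨h.1.1, h.1.2.1, h.1.2.2, h.2⟩,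
    fun h => ⟨⟨h.algebraicIndependent, h.isHomogeneousOfPosDegree, h.finite⟩, h.free⟩⟩

theorem isInternal_inheritedGrading_homogeneousSubmodule
    (hR : ∀ d, ∀ p ∈ R, homogeneousComponent d p ∈ R) :
    DirectSum.IsInternal (inheritedGrading (homogeneousSubmodule (Fin n) F) R) :=
  isInternal_inheritedGrading fun d p hp => proj_homogeneousSubmodule_apply d p ▸ hR d p hp

theorem isCM_of_retraction (hT : ∀ d, ∀ p ∈ T, homogeneousComponent d p ∈ T)
    (hR : ∀ d, ∀ p ∈ R, homogeneousComponent d p ∈ R) (hTR : T ≤ R)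
    (hint : ∀ p ∈ R, IsIntegral T p)
    (r : MvPolynomial (Fin n) F →ₗ[T] MvPolynomial (Fin n) F) (hr_mem : ∀ p ∈ R, r p ∈ T)
    (hr_id : ∀ p ∈ T, r p = p) (hCM : IsCM R) : IsCM T := by
  let _ : Algebra T R := (Subalgebra.inclusion hTR).toAlgebra
  have : IsScalarTower F T R := .of_algebraMap_eq fun _ => rfl
  have : IsScalarTower T R (MvPolynomial (Fin n) F) := .of_algebraMap_eq fun _ => rfl
  have : Algebra.IsIntegral T R := ⟨fun x =>
    (isIntegral_algebraMap_iff (B := MvPolynomial (Fin n) F) Subtype.val_injective).1 (hint x x.2)⟩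
  let _ := (isInternal_inheritedGrading_homogeneousSubmodule hT).gradedAlgebra
  let _ := (isInternal_inheritedGrading_homogeneousSubmodule hR).gradedAlgebra
  let rT : R →ₗ[T] T :=
    { toFun p := ⟨r p, hr_mem p p.2⟩
      map_add' p q := Subtype.ext (map_add r p.1 q.1)
      map_smul' t p := Subtype.ext (map_smul r t p.1) }
  rw [isCM_iff_exists_isFreeHSOP] at hCM ⊢
  obtain ⟨f, hf⟩ := hCM
  exact exists_isFreeHSOP_of_retraction (R := R) (fun _ _ ht => ht) (r := rT)
    (LinearMap.ext fun t => Subtype.ext (hr_id t t.2)) hf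

end PolynomialSubalgebra

section RelativeReynolds

variable {G : Type*} [Group G] {H : Subgroup G}

theorem smul_out_smul_of_forall_smul_eq {X : Type*} [MulAction G X] {x : X}
    (hx : ∀ h : H, h • x = x) (g : G) (q : G ⧸ H) : g • q.out • x = (g • q).out • x := by
  have hcoset : ((g • q.out : G) : G ⧸ H) = ((g • q).out : G) := by
    rw [← MulAction.Quotient.smul_coe, QuotientGroup.out_eq', QuotientGroup.out_eq']
  have hfixed := hx ⟨_, QuotientGroup.eq.1 hcoset⟩
  rw [Subgroup.smul_def, mul_smul, inv_smul_eq_iff, smul_eq_mul, mul_smul] at hfixed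
  exact hfixed.symm

theorem smul_sum_out_smul_of_forall_smul_eq {M : Type*} [AddCommMonoid M] [DistribMulAction G M]
    [Fintype (G ⧸ H)] {x : M} (hx : ∀ h : H, h • x = x) (g : G) :
    g • ∑ q : G ⧸ H, q.out • x = ∑ q : G ⧸ H, q.out • x := by
  rw [Finset.smul_sum, ← Equiv.sum_comp (MulAction.toPerm g) fun q : G ⧸ H => q.out • x]
  exact Finset.sum_congr rfl fun q _ => smul_out_smul_of_forall_smul_eq hx g q

theorem smul_prod_out_smul_of_forall_smul_eq {M : Type*} [CommMonoid M] [MulDistribMulAction G M]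
    [Fintype (G ⧸ H)] {x : M} (hx : ∀ h : H, h • x = x) (g : G) :
    g • ∏ q : G ⧸ H, q.out • x = ∏ q : G ⧸ H, q.out • x := by
  rw [Finset.smul_prod', ← Equiv.prod_comp (MulAction.toPerm g) fun q : G ⧸ H => q.out • x]
  exact Finset.prod_congr rfl fun q _ => smul_out_smul_of_forall_smul_eq hx g q

variable (F : Type*) {B : Type*} [Field F] [CommRing B] [Algebra F B] [MulSemiringAction G B]
  [SMulCommClass G F B]

theorem isIntegral_fixedPoints_of_forall_smul_eq [Finite (G ⧸ H)] {x : B}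
    (hx : ∀ h : H, h • x = x) : IsIntegral (FixedPoints.subalgebra F B G) x := by
  cases nonempty_fintype (G ⧸ H)
  have hX (h : H) : h • (Polynomial.X - Polynomial.C x) = Polynomial.X - Polynomial.C x := by
    rw [smul_sub, Polynomial.smul_X, Polynomial.smul_C, hx]
  let p : Polynomial B := ∏ q : G ⧸ H, q.out • (Polynomial.X - Polynomial.C x)
  have hp (g : G) : g • p = p := smul_prod_out_smul_of_forall_smul_eq hX g
  have hmonic : p.Monic := Polynomial.monic_prod_of_monic _ _ fun q _ => by
    rw [smul_sub, Polynomial.smul_X, Polynomial.smul_C]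
    exact Polynomial.monic_X_sub_C _
  have hroot : p.eval x = 0 := by
    obtain ⟨h, hh⟩ := QuotientGroup.mk_out_eq_mul H 1
    rw [Polynomial.eval_prod]
    refine Finset.prod_eq_zero (Finset.mem_univ ((1 : G) : G ⧸ H)) ?_
    rw [hh, one_mul, ← Subgroup.smul_def, hX, Polynomial.eval_sub, Polynomial.eval_X,
      Polynomial.eval_C, sub_self]
  have hlifts : p ∈ Polynomial.lifts (algebraMap (FixedPoints.subalgebra F B G) B) := by
    rw [Polynomial.lifts_iff_coeff_lifts]
    exact fun i => ⟨⟨p.coeff i, fun g => by rw [← Polynomial.coeff_smul, hp]⟩, rfl⟩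
  obtain ⟨P, hP, -, hPmonic⟩ := Polynomial.lifts_and_natDegree_eq_and_monic hlifts hmonic
  exact ⟨P, hPmonic, by rw [Polynomial.eval₂_eq_eval_map, hP, hroot]⟩

variable (H) [Fintype (G ⧸ H)]

/-- The average over `G ⧸ H`, which projects the `H`-invariants onto the `G`-invariants when
`[G : H]` is invertible in `F`. Off the `H`-invariants it depends on the coset representatives
`Quotient.out`. -/
noncomputable def relativeReynolds : B →ₗ[FixedPoints.subalgebra F B G] B where
  toFun x := (H.index : F)⁻¹ • ∑ q : G ⧸ H, q.out • x
  map_add' x y := by simp only [smul_add, Finset.sum_add_distrib]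
  map_smul' t x := by
    have ht (g : G) : g • (t : B) = t := t.2 g
    simp only [Subalgebra.smul_def, smul_eq_mul, smul_mul', ht, ← Finset.mul_sum, mul_smul_comm,
      RingHom.id_apply]

theorem relativeReynolds_apply (x : B) :
    relativeReynolds H F x = (H.index : F)⁻¹ • ∑ q : G ⧸ H, q.out • x := rfl

theorem relativeReynolds_mem_fixedPoints {x : B} (hx : ∀ h : H, h • x = x) :
    relativeReynolds H F x ∈ FixedPoints.subalgebra F B G := fun g => by
  rw [relativeReynolds_apply, smul_comm, smul_sum_out_smul_of_forall_smul_eq hx]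

variable {F} in
theorem relativeReynolds_eq_self (hindex : (H.index : F) ≠ 0) {x : B}
    (hx : x ∈ FixedPoints.subalgebra F B G) : relativeReynolds H F x = x := by
  have hx (g : G) : g • x = x := hx g
  simp only [relativeReynolds_apply, hx, Finset.sum_const, Finset.card_univ]
  rw [← Nat.card_eq_fintype_card, ← Subgroup.index, ← Nat.cast_smul_eq_nsmul F, smul_smul,
    inv_mul_cancel₀ hindex, one_smul]

end RelativeReynolds

section Substitution

variable {F : Type*} [CommRing F] {n : ℕ}

theorem matSub_X (M : Matrix (Fin n) (Fin n) F) (i : Fin n) :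
    matSub M (X i) = ∑ j, M i j • X j := by
  rw [matSub, aeval_X]

theorem matSub_mul (M N : Matrix (Fin n) (Fin n) F) :
    matSub (M * N) = (matSub N).comp (matSub M) := by
  refine algHom_ext fun i => ?_
  simp only [AlgHom.comp_apply, matSub_X, map_sum, map_smul, Matrix.mul_apply, Finset.sum_smul,
    Finset.smul_sum, smul_smul]
  exact Finset.sum_comm

theorem matSub_one : matSub (1 : Matrix (Fin n) (Fin n) F) = AlgHom.id F _ := by
  refine algHom_ext fun i => ?_
  simp [matSub_X, Matrix.one_apply, ite_smul]

theorem isHomogeneous_matSub (M : Matrix (Fin n) (Fin n) F) {d : ℕ}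
    {p : MvPolynomial (Fin n) F} (hp : p.IsHomogeneous d) : (matSub M p).IsHomogeneous d := by
  have hlinear (i : Fin n) : (∑ j, M i j • X j : MvPolynomial (Fin n) F).IsHomogeneous 1 :=
    (homogeneousSubmodule (Fin n) F 1).sum_mem fun j _ =>
      Submodule.smul_mem _ _ (isHomogeneous_X F j)
  simpa only [matSub, one_mul] using hp.aeval _ hlinear

theorem homogeneousComponent_matSub (M : Matrix (Fin n) (Fin n) F) (d : ℕ)
    (p : MvPolynomial (Fin n) F) :
    homogeneousComponent d (matSub M p) = matSub M (homogeneousComponent d p) := by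
  let φ : homogeneousSubmodule (Fin n) F →+*ᵍ homogeneousSubmodule (Fin n) F :=
    ⟨matSub M, isHomogeneous_matSub M⟩
  rw [← proj_homogeneousSubmodule_apply, ← proj_homogeneousSubmodule_apply]
  exact (GradedRingHom.map_directSumDecompose _ _ φ).symm

variable {G : Type*} [Group G] (ρ : G →* GL (Fin n) F)

theorem homogeneousComponent_mem_invariants (d : ℕ) {p : MvPolynomial (Fin n) F}
    (hp : p ∈ invariants ρ) : homogeneousComponent d p ∈ invariants ρ := fun σ => by
  rw [← homogeneousComponent_matSub, hp σ]

theorem invariants_le_invariants_comp_subtype (H : Subgroup G) :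
    invariants ρ ≤ invariants (ρ.comp H.subtype) :=
  fun _ hp σ => hp σ

/-- The left action of `G` on polynomials corresponding to the right action `matSub ∘ ρ`:
`σ` acts as the substitution by `ρ σ⁻¹`. -/
@[reducible]
noncomputable def substitutionAction : MulSemiringAction G (MvPolynomial (Fin n) F) where
  smul σ p := matSub (ρ σ⁻¹ : Matrix (Fin n) (Fin n) F) p
  one_smul p := by
    change matSub _ p = p
    rw [inv_one, map_one, Units.val_one, matSub_one, AlgHom.id_apply]
  mul_smul σ τ p := by
    change matSub _ p = matSub _ (matSub _ p)
    rw [mul_inv_rev, map_mul, Units.val_mul, matSub_mul, AlgHom.comp_apply]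
  smul_zero _ := map_zero _
  smul_add _ := map_add _
  smul_one _ := map_one _
  smul_mul _ := map_mul _

theorem smulCommClass_substitutionAction :
    let _ := substitutionAction ρ
    SMulCommClass G F (MvPolynomial (Fin n) F) :=
  let _ := substitutionAction ρ
  ⟨fun _ c p => map_smul (matSub _) c p⟩

theorem invariants_eq_fixedPoints :
    let _ := substitutionAction ρ
    have := smulCommClass_substitutionAction ρ
    invariants ρ = FixedPoints.subalgebra F (MvPolynomial (Fin n) F) G := by
  intro _ _
  ext p
  constructor
  · intro hp σ
    exact hp σ⁻¹
  · intro hp σ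
    have hfixed : matSub (ρ σ⁻¹⁻¹ : Matrix (Fin n) (Fin n) F) p = p := hp σ⁻¹
    rwa [inv_inv] at hfixed

end Substitution

theorem stmt0_general {F : Type*} [Field F] {G : Type*} [Group G] {n : ℕ}
    (ρ : G →* GL (Fin n) F) (H : Subgroup G)
    (hchar : ¬ ((ringChar F : ℕ) ∣ H.index))
    (hH : IsCM (invariants (ρ.comp H.subtype))) :
    IsCM (invariants ρ) := by
  have hindex : (H.index : F) ≠ 0 := mt (ringChar.spec F _).1 hchar
  let _ : Fintype (G ⧸ H) := H.fintypeOfIndexNeZero fun h => hindex (by rw [h, Nat.cast_zero])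
  let _ := substitutionAction ρ
  have := smulCommClass_substitutionAction ρ
  have hfixed (p) (hp : p ∈ invariants (ρ.comp H.subtype)) (h : H) : h • p = p := hp h⁻¹
  have hT (d) (p) (hp : p ∈ invariants ρ) := homogeneousComponent_mem_invariants ρ d hp
  have hTR := invariants_le_invariants_comp_subtype ρ H
  rw [invariants_eq_fixedPoints ρ] at hT hTR ⊢
  exact isCM_of_retraction hT (fun d _ => homogeneousComponent_mem_invariants _ d) hTR
    (fun p hp => isIntegral_fixedPoints_of_forall_smul_eq F (hfixed p hp))
    (relativeReynolds H F)
    (fun p hp => relativeReynolds_mem_fixedPoints H F (hfixed p hp))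
    (fun _ => relativeReynolds_eq_self H hindex) hH

/-- Let `H ≤ G` be a subgroup such that `char F` does not divide the index
`[G : H]`. If the invariant ring `S[V]^H` is Cohen-Macaulay, then `S[V]^G` is
Cohen-Macaulay as well. -/
theorem stmt0 {F : Type*} [Field F] {G : Type*} [Group G] [Finite G] {n : ℕ}
    (ρ : G →* GL (Fin n) F) (H : Subgroup G)
    (hchar : ¬ ((ringChar F : ℕ) ∣ H.index))
    (hH : IsCM (invariants (ρ.comp H.subtype))) :
    IsCM (invariants ρ) :=
  stmt0_general ρ H hchar hH
end

section
/- The G-invariant part (U'·S[U])^G of the ideal of S[U] generated by U' equals the principal ideal f̂·S[U]^G of S[U]^G, and the map induced by β yields an isomorphism of graded F-algebras S[U]^G/(f̂·S[U]^G) ≅ S[V]^G. -/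
set_option synthInstance.maxHeartbeats 1000000
set_option maxHeartbeats 1000000

open MvPolynomial

/-- The algebra homomorphism `S[U] → S[V]` induced by a linear map `U → V` given by a
(rectangular) matrix acting on the right on row vectors. -/
noncomputable def betaAlg {F : Type*} [CommRing F] {m : ℕ}
    (B : Matrix (Fin (m + 1)) (Fin m) F) :
    MvPolynomial (Fin (m + 1)) F →ₐ[F] MvPolynomial (Fin m) F :=
  aeval (fun i => ∑ j, B i j • X j)

/-- The linear form in `S[U]₁` corresponding to a vector of `U`. -/
noncomputable def linForm {F : Type*} [CommRing F] {n : ℕ} (v : Fin n → F) :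
    MvPolynomial (Fin n) F :=
  ∑ i, v i • X i

/-!
Because of the section `γ`, the algebra endomorphism `p ↦ γ(β(p))` of `S[U]` moves every variable
by a linear form in `ker (U → V)`, hence is the identity modulo the ideal generated by that kernel.
So the kernel of `β` on `S[U]` is `f̂ · S[U]`. As `γ` is equivariant, it maps `S[V]^G` into
`S[U]^G`, which gives surjectivity on invariants; as `f̂` is fixed and `S[U]` is a domain, `f̂ * h`
is invariant only if `h` is.
-/

section LinForm

variable {R : Type*} [CommRing R] {n : ℕ}

theorem linForm_eq_linearCombination (v : Fin n → R) :
    linForm v = Fintype.linearCombination R (X : Fin n → MvPolynomial (Fin n) R) v :=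
  rfl

theorem linForm_zero : linForm (0 : Fin n → R) = 0 := by
  rw [linForm_eq_linearCombination, map_zero]

theorem linForm_sub (u v : Fin n → R) : linForm (u - v) = linForm u - linForm v := by
  simp only [linForm_eq_linearCombination, map_sub]

theorem linForm_smul (c : R) (v : Fin n → R) : linForm (c • v) = c • linForm v := by
  simp only [linForm_eq_linearCombination, map_smul]

theorem linForm_single_one (i : Fin n) : linForm (Pi.single i (1 : R)) = X i := by
  rw [linForm_eq_linearCombination, Fintype.linearCombination_apply_single, one_smul]

theorem linForm_injective : Function.Injective (linForm : (Fin n → R) → MvPolynomial (Fin n) R) :=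
  (linearIndependent_X (Fin n) R).fintypeLinearCombination_injective

theorem linForm_ne_zero {v : Fin n → R} (hv : v ≠ 0) : linForm v ≠ 0 :=
  linForm_zero (R := R) (n := n) ▸ linForm_injective.ne hv

end LinForm

theorem algHom_sub_mem_of_forall_X_sub_mem {σ R A : Type*} [CommRing R] [CommRing A] [Algebra R A]
    {φ ψ : MvPolynomial σ R →ₐ[R] A} {I : Ideal A} (hX : ∀ i, φ (X i) - ψ (X i) ∈ I)
    (p : MvPolynomial σ R) : φ p - ψ p ∈ I := by
  have hmk : (Ideal.Quotient.mkₐ R I).comp φ = (Ideal.Quotient.mkₐ R I).comp ψ :=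
    algHom_ext fun i => Ideal.Quotient.eq.2 (hX i)
  exact Ideal.Quotient.eq.1 (DFunLike.congr_fun hmk p)

section LinSub

variable {R : Type*} [CommRing R] {a b c : ℕ}

/-- The algebra homomorphism of polynomial rings induced by a linear map, given by a matrix of
arbitrary shape acting on the right on row vectors. Both `matSub` and `betaAlg` are
definitionally instances of it. -/
noncomputable def linSub (M : Matrix (Fin a) (Fin b) R) :
    MvPolynomial (Fin a) R →ₐ[R] MvPolynomial (Fin b) R :=
  aeval fun i => linForm (M.row i)

theorem linSub_X (M : Matrix (Fin a) (Fin b) R) (i : Fin a) : linSub M (X i) = linForm (M.row i) :=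
  aeval_X _ i

theorem linSub_linForm (M : Matrix (Fin a) (Fin b) R) (v : Fin a → R) :
    linSub M (linForm v) = linForm (Matrix.vecMul v M) := by
  calc linSub M (linForm v) = ∑ i, v i • linForm (M.row i) := by
        simp only [linForm_eq_linearCombination v, Fintype.linearCombination_apply, map_sum,
          map_smul, linSub_X]
    _ = linForm (Matrix.vecMul v M) := by
        simp only [linForm_eq_linearCombination, Matrix.vecMul_eq_sum, map_sum, map_smul,
          Matrix.row]

theorem linSub_linSub (M : Matrix (Fin a) (Fin b) R) (N : Matrix (Fin b) (Fin c) R)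
    (p : MvPolynomial (Fin a) R) : linSub N (linSub M p) = linSub (M * N) p := by
  have hcomp : (linSub N).comp (linSub M) = linSub (M * N) :=
    algHom_ext fun i => by
      rw [AlgHom.comp_apply, ← linForm_single_one, linSub_linForm, linSub_linForm, linSub_linForm,
        Matrix.vecMul_vecMul]
  exact DFunLike.congr_fun hcomp p

theorem linSub_one (p : MvPolynomial (Fin a) R) :
    linSub (1 : Matrix (Fin a) (Fin a) R) p = p := by
  have hid : linSub (1 : Matrix (Fin a) (Fin a) R) = AlgHom.id R _ :=
    algHom_ext fun i => by
      rw [← linForm_single_one, linSub_linForm, Matrix.vecMul_one, AlgHom.id_apply]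
  exact DFunLike.congr_fun hid p

theorem ker_linSub_eq_span {B : Matrix (Fin a) (Fin b) R} {γ : Matrix (Fin b) (Fin a) R}
    (hγB : γ * B = 1) :
    RingHom.ker (linSub B) = Ideal.span (linForm '' {u | Matrix.vecMul u B = 0}) := by
  apply le_antisymm
  · intro p hp
    have hsub : p - linSub (B * γ) p ∈ Ideal.span (linForm '' {u | Matrix.vecMul u B = 0}) := by
      refine algHom_sub_mem_of_forall_X_sub_mem (φ := AlgHom.id R _) (fun i => ?_) p
      rw [AlgHom.id_apply, ← linForm_single_one, linSub_linForm, ← linForm_sub]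
      refine Ideal.subset_span (Set.mem_image_of_mem _ ?_)
      rw [Set.mem_ofPred_eq, Matrix.sub_vecMul, Matrix.vecMul_vecMul, Matrix.mul_assoc, hγB,
        Matrix.mul_one, sub_self]
    rwa [← linSub_linSub, RingHom.mem_ker.1 hp, map_zero, sub_zero] at hsub
  · rw [Ideal.span_le]
    rintro _ ⟨u, hu, rfl⟩
    rw [SetLike.mem_coe, RingHom.mem_ker, linSub_linForm, hu, linForm_zero]

theorem ker_linSub_eq_span_singleton {B : Matrix (Fin a) (Fin b) R}
    {γ : Matrix (Fin b) (Fin a) R} {f : Fin a → R} (hγB : γ * B = 1)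
    (hker : ∀ u, Matrix.vecMul u B = 0 ↔ ∃ c : R, u = c • f) :
    RingHom.ker (linSub B) = Ideal.span {linForm f} := by
  rw [ker_linSub_eq_span hγB]
  apply le_antisymm
  · rw [Ideal.span_le]
    rintro _ ⟨u, hu, rfl⟩
    obtain ⟨c, rfl⟩ := (hker u).1 hu
    rw [linForm_smul]
    exact Submodule.smul_of_tower_mem _ c (Ideal.mem_span_singleton_self _)
  · rw [Ideal.span_singleton_le_iff_mem]
    exact Ideal.subset_span ⟨f, (hker f).2 ⟨1, (one_smul R f).symm⟩, rfl⟩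

end LinSub

section Invariants

variable {R : Type*} [CommRing R] {G : Type*} [Group G] {a b : ℕ}
  {ρ : G →* GL (Fin a) R} {ρ' : G →* GL (Fin b) R}

theorem mem_invariants_iff {p : MvPolynomial (Fin a) R} :
    p ∈ invariants ρ ↔ ∀ σ, linSub (ρ σ : Matrix (Fin a) (Fin a) R) p = p :=
  Iff.rfl

theorem linForm_mem_invariants {v : Fin a → R}
    (hv : ∀ σ, Matrix.vecMul v (ρ σ : Matrix (Fin a) (Fin a) R) = v) :
    linForm v ∈ invariants ρ :=
  mem_invariants_iff.2 fun σ => by rw [linSub_linForm, hv σ]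

theorem linSub_mem_invariants {M : Matrix (Fin a) (Fin b) R}
    (hM : ∀ σ, (ρ σ : Matrix (Fin a) (Fin a) R) * M = M * (ρ' σ : Matrix (Fin b) (Fin b) R))
    {p : MvPolynomial (Fin a) R} (hp : p ∈ invariants ρ) : linSub M p ∈ invariants ρ' :=
  mem_invariants_iff.2 fun σ => by
    rw [linSub_linSub, ← hM, ← linSub_linSub, mem_invariants_iff.1 hp σ]

theorem mem_invariants_of_mul_mem [IsDomain R] {f h : MvPolynomial (Fin a) R}
    (hf : f ∈ invariants ρ) (hf0 : f ≠ 0) (hfh : f * h ∈ invariants ρ) : h ∈ invariants ρ := by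
  refine mem_invariants_iff.2 fun σ => mul_left_cancel₀ hf0 ?_
  calc f * linSub (ρ σ : Matrix (Fin a) (Fin a) R) h
      = linSub (ρ σ : Matrix (Fin a) (Fin a) R) (f * h) := by
        rw [map_mul, mem_invariants_iff.1 hf σ]
    _ = f * h := mem_invariants_iff.1 hfh σ

theorem mem_span_singleton_and_mem_invariants_iff [IsDomain R] {f p : MvPolynomial (Fin a) R}
    (hf : f ∈ invariants ρ) (hf0 : f ≠ 0) :
    p ∈ Ideal.span {f} ∧ p ∈ invariants ρ ↔ ∃ h ∈ invariants ρ, p = f * h := by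
  constructor
  · rintro ⟨hspan, hp⟩
    obtain ⟨h, rfl⟩ := Ideal.mem_span_singleton.1 hspan
    exact ⟨h, mem_invariants_of_mul_mem hf hf0 hp, rfl⟩
  · rintro ⟨h, hh, rfl⟩
    exact ⟨Ideal.mem_span_singleton.2 (dvd_mul_right f h), mul_mem hf hh⟩

end Invariants

theorem stmt2_general {R : Type*} [CommRing R] [IsDomain R] {G : Type*} [Group G] {m : ℕ}
    (ρU : G →* GL (Fin (m + 1)) R) (ρV : G →* GL (Fin m) R)
    (B : Matrix (Fin (m + 1)) (Fin m) R) (fhat : Fin (m + 1) → R)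
    (hker : ∀ u : Fin (m + 1) → R, Matrix.vecMul u B = 0 ↔ ∃ c : R, u = c • fhat)
    (hne : fhat ≠ 0)
    (hequiv : ∀ σ : G, (ρU σ : Matrix (Fin (m + 1)) (Fin (m + 1)) R) * B
      = B * (ρV σ : Matrix (Fin m) (Fin m) R))
    (hfix : ∀ σ : G, Matrix.vecMul fhat (ρU σ : Matrix (Fin (m + 1)) (Fin (m + 1)) R) = fhat)
    (hsplit : ∃ γ : Matrix (Fin m) (Fin (m + 1)) R, γ * B = 1 ∧
      ∀ σ : G, (ρV σ : Matrix (Fin m) (Fin m) R) * γ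
        = γ * (ρU σ : Matrix (Fin (m + 1)) (Fin (m + 1)) R)) :
    ({p : MvPolynomial (Fin (m + 1)) R |
        p ∈ Ideal.span {linForm fhat} ∧ p ∈ invariants ρU}
      = {p : MvPolynomial (Fin (m + 1)) R |
          ∃ h ∈ invariants ρU, p = linForm fhat * h}) ∧
    (∀ p ∈ invariants ρU, betaAlg B p ∈ invariants ρV) ∧
    (∀ q ∈ invariants ρV, ∃ p ∈ invariants ρU, betaAlg B p = q) ∧
    (∀ p ∈ invariants ρU,
      (betaAlg B p = 0 ↔ ∃ h ∈ invariants ρU, p = linForm fhat * h)) := by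
  obtain ⟨γ, hγB, hγ⟩ := hsplit
  have hβ : betaAlg B = linSub B := rfl
  have hideal (p : MvPolynomial (Fin (m + 1)) R) :
      p ∈ Ideal.span {linForm fhat} ∧ p ∈ invariants ρU ↔
        ∃ h ∈ invariants ρU, p = linForm fhat * h :=
    mem_span_singleton_and_mem_invariants_iff (linForm_mem_invariants hfix) (linForm_ne_zero hne)
  rw [hβ]
  refine ⟨Set.ext hideal, fun p hp => linSub_mem_invariants hequiv hp, fun q hq => ?_,
    fun p hp => ?_⟩
  · exact ⟨linSub γ q, linSub_mem_invariants hγ hq, by rw [linSub_linSub, hγB, linSub_one]⟩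
  · rw [← hideal, and_iff_left hp, ← ker_linSub_eq_span_singleton hγB hker, RingHom.mem_ker]

/-- In the situation of a split short exact sequence
`0 → U' → U →(β) V → 0` of right `FG`-modules, with `U' ≅ F` the trivial module spanned by a
`G`-fixed element `f̂ ∈ U ⊆ S[U]₁`: the `G`-invariant part `(U'·S[U])^G` of the ideal of
`S[U]` generated by `U'` equals the principal ideal `f̂·S[U]^G` of `S[U]^G`, and the map
induced by `β` yields an isomorphism of graded `F`-algebras
`S[U]^G/(f̂·S[U]^G) ≅ S[V]^G`. -/
theorem stmt2 {F : Type*} [Field F] {G : Type*} [Group G] [Finite G] {m : ℕ}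
    (ρU : G →* GL (Fin (m + 1)) F) (ρV : G →* GL (Fin m) F)
    (B : Matrix (Fin (m + 1)) (Fin m) F) (fhat : Fin (m + 1) → F)
    -- `β` is surjective:
    (hsur : ∀ v : Fin m → F, ∃ u : Fin (m + 1) → F, Matrix.vecMul u B = v)
    -- the kernel of `β` is `U' = F·f̂`:
    (hker : ∀ u : Fin (m + 1) → F, Matrix.vecMul u B = 0 ↔ ∃ c : F, u = c • fhat)
    (hne : fhat ≠ 0)
    -- `β` is `G`-equivariant:
    (hequiv : ∀ σ : G, (ρU σ : Matrix (Fin (m + 1)) (Fin (m + 1)) F) * B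
      = B * (ρV σ : Matrix (Fin m) (Fin m) F))
    -- `f̂` is `G`-fixed:
    (hfix : ∀ σ : G, Matrix.vecMul fhat (ρU σ : Matrix (Fin (m + 1)) (Fin (m + 1)) F) = fhat)
    -- the sequence splits, via a `G`-equivariant section `γ` of `β`:
    (hsplit : ∃ γ : Matrix (Fin m) (Fin (m + 1)) F, γ * B = 1 ∧
      ∀ σ : G, (ρV σ : Matrix (Fin m) (Fin m) F) * γ
        = γ * (ρU σ : Matrix (Fin (m + 1)) (Fin (m + 1)) F)) :
    -- `(U'·S[U])^G = f̂·S[U]^G`: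
    ({p : MvPolynomial (Fin (m + 1)) F |
        p ∈ Ideal.span {linForm fhat} ∧ p ∈ invariants ρU}
      = {p : MvPolynomial (Fin (m + 1)) F |
          ∃ h ∈ invariants ρU, p = linForm fhat * h}) ∧
    -- `β` maps `S[U]^G` into `S[V]^G` …
    (∀ p ∈ invariants ρU, betaAlg B p ∈ invariants ρV) ∧
    -- … surjectively onto `S[V]^G` …
    (∀ q ∈ invariants ρV, ∃ p ∈ invariants ρU, betaAlg B p = q) ∧
    -- … with kernel exactly `f̂·S[U]^G`; i.e. `β` induces `S[U]^G/(f̂·S[U]^G) ≅ S[V]^G`: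
    (∀ p ∈ invariants ρU,
      (betaAlg B p = 0 ↔ ∃ h ∈ invariants ρU, p = linForm fhat * h)) :=
  stmt2_general ρU ρV B fhat hker hne hequiv hfix hsplit
end

section
/- The vector v = (1,1,1,1,1,1,1) ∈ W is fixed by D_W(σ) for every σ ∈ G, the subspace W' = {w ∈ W : w_7 = 0} is a G-submodule of W, and W = W' ⊕ F_2·v as G-modules; in particular the extension 0 → W' → W → F_2 → 0 of G-modules (with F_2 the trivial module) splits. -/
set_option synthInstance.maxHeartbeats 1000000
set_option maxHeartbeats 1000000

/-- The field with two elements. -/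
abbrev F2 := ZMod 2

/-- `G = GL₃(𝔽₂)`. -/
abbrev G3 := GL (Fin 3) F2

/-- The generator `A` of `G`. -/
def Agen : G3 := ⟨!![1,0,1; 0,1,0; 0,0,1], !![1,0,1; 0,1,0; 0,0,1], by decide, by decide⟩

/-- The generator `B` of `G`. -/
def Bgen : G3 := ⟨!![0,0,1; 1,0,0; 0,1,0], !![0,1,0; 0,0,1; 1,0,0], by decide, by decide⟩

/-- The matrix `D_W(A)`. -/
def DWA : Matrix (Fin 7) (Fin 7) F2 :=
  !![1,0,0,0,0,0,0; 0,1,0,0,0,0,0; 1,0,1,0,0,0,0; 0,0,0,1,0,0,0;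
     0,0,0,1,1,0,0; 1,0,0,0,0,1,0; 0,0,0,1,0,0,1]

/-- The matrix `D_W(B)`. -/
def DWB : Matrix (Fin 7) (Fin 7) F2 :=
  !![0,0,1,0,0,0,0; 1,0,0,0,0,0,0; 0,1,0,0,0,0,0; 0,0,0,0,0,1,0;
     0,0,0,1,0,0,0; 0,0,0,0,1,0,0; 0,0,0,0,0,0,1]

/-- The vector `v = (1,1,1,1,1,1,1) ∈ W = 𝔽₂⁷`. -/
def vAll : Fin 7 → F2 := ![1,1,1,1,1,1,1]

/-- The subspace `W' = {w ∈ W : w₇ = 0}`. -/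
def W7' : Submodule F2 (Fin 7 → F2) where
  carrier := {w | w 6 = 0}
  add_mem' := by
    intro a b ha hb
    simp only [Set.mem_setOf_eq, Pi.add_apply] at *
    rw [ha, hb, add_zero]
  zero_mem' := rfl
  smul_mem' := by
    intro c a ha
    simp only [Set.mem_setOf_eq, Pi.smul_apply, smul_eq_mul] at *
    rw [ha, mul_zero]

/-!
`A` is the elementary matrix `1 + E₁₃` and `B` is the permutation matrix of a 3-cycle. Conjugating
`A` by powers of `B`, and then taking commutators of elementary matrices, produces every elementary
matrix; over `𝔽₂` the only invertible diagonal matrix is `1`, so Gaussian elimination shows that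
`A` and `B` generate `G`. It remains to look at the generators: each fixes the row vector `v` and
the column vector `e₇`. As `w₇ = w · e₇`, the functional `w ↦ w₇` is therefore `G`-invariant; its
kernel is `W'`, and it takes the value `1` at the fixed vector `v`, which splits `W`.
-/

section Generation

open Matrix Matrix.SpecialLinearGroup Equiv
open scoped commutatorElement

variable {ι R K : Type*} [Fintype ι] [DecidableEq ι] [CommRing R] [Field K]

theorem commutatorElement_transvection {i j k : ι} (hij : i ≠ j) (hjk : j ≠ k) (hik : i ≠ k)
    (a b : R) : ⁅transvection hij a, transvection hjk b⁆ = transvection hik (a * b) := by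
  rw [commutatorElement_def, mul_inv_eq_iff_eq_mul, mul_inv_eq_iff_eq_mul]
  refine Subtype.ext ?_
  simp only [coe_mul, transvection_coe, mul_add, add_mul, mul_one, one_mul, single_mul_single_same,
    single_mul_single_of_ne _ _ _ _ hik.symm, single_mul_single_of_ne _ _ _ _ hjk.symm,
    Matrix.zero_mul]
  abel

-- `σ.permMatrix R` maps `e_{σ i}` to `e_i`; the matrix of `e_i ↦ e_{σ i}` is `σ⁻¹.permMatrix R`.
theorem permMatrix_inv_mul_transvection (σ : Perm ι) (i j : ι) (c : R) :
    σ⁻¹.permMatrix R * Matrix.transvection i j c =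
      Matrix.transvection (σ i) (σ j) c * σ⁻¹.permMatrix R := by
  simp only [Matrix.transvection, mul_add, add_mul, mul_one, one_mul, Perm.permMatrix,
    PEquiv.toMatrix_toPEquiv_mul, PEquiv.mul_toMatrix_toPEquiv]
  congr 1
  ext a b
  simp [single_apply, Perm.inv_def, Equiv.eq_symm_apply]

theorem eq_top_of_forall_transvection_mem [Subsingleton Kˣ] {H : Subgroup (GL ι K)}
    (hH : ∀ {i j : ι} (hij : i ≠ j) (c : K), toGL (transvection hij c) ∈ H) : H = ⊤ := by
  refine eq_top_iff.2 fun g _ => ?_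
  refine diagonal_transvection_induction_of_det_ne_zero
    (fun M => ∀ h : GL ι K, (h : Matrix ι ι K) = M → h ∈ H) g g.det_ne_zero ?_ ?_ ?_ g rfl
  · intro d hd h hhd
    have d_eq_one : d = 1 := by
      rw [det_diagonal, Finset.prod_ne_zero_iff] at hd
      funext i
      exact isUnit_iff_eq_one.1 (hd i (Finset.mem_univ i)).isUnit
    have h_eq_one : h = 1 := Units.ext (by rw [hhd, d_eq_one]; exact diagonal_one)
    exact h_eq_one ▸ one_mem H
  · intro t h hht
    have h_eq : h = toGL (transvection t.hij t.c) := Units.ext hht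
    exact h_eq ▸ hH t.hij t.c
  · intro A B hA hB ihA ihB h hhAB
    have h_eq : h = .mkOfDetNeZero A hA * .mkOfDetNeZero B hB := Units.ext hhAB
    exact h_eq ▸ mul_mem (ihA _ rfl) (ihB _ rfl)

variable {σ : Perm ι}

theorem transvection_perm_apply_mem_of_permMatrix_mem {H : Subgroup (GL ι R)} {P : GL ι R}
    (hP : P ∈ H) (hPσ : (P : Matrix ι ι R) = σ⁻¹.permMatrix R) {i j : ι} (hij : i ≠ j) {c : R}
    (h : toGL (transvection hij c) ∈ H) :
    toGL (transvection (σ.injective.ne hij) c) ∈ H := by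
  have conj_eq : P * toGL (transvection hij c) * P⁻¹ =
      toGL (transvection (σ.injective.ne hij) c) := by
    refine mul_inv_eq_of_eq_mul (Units.ext ?_)
    rw [Units.val_mul, Units.val_mul, hPσ]
    exact permMatrix_inv_mul_transvection σ i j c
  exact conj_eq ▸ mul_mem (mul_mem hP h) (inv_mem hP)

theorem transvection_mem_of_forall_perm_apply_mem {H : Subgroup (SpecialLinearGroup ι R)}
    (hσ : ∀ i j, σ.SameCycle i j)
    (h : ∀ {i : ι} (hi : σ i ≠ i) (c : R), transvection hi c ∈ H)
    {i j : ι} (hij : i ≠ j) (c : R) : transvection hij c ∈ H := by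
  obtain ⟨k, rfl⟩ := (hσ j i).exists_nat_pow_eq
  induction k with
  | zero => exact absurd rfl hij
  | succ k ih =>
    simp only [pow_succ', Perm.mul_apply] at hij ⊢
    by_cases hk : (σ ^ k) j = j
    · simpa only [hk] using h (by simpa only [hk] using hij) c
    · have hne : σ ((σ ^ k) j) ≠ (σ ^ k) j :=
        fun hfix => hk ((hσ _ j).eq_of_left hfix)
      rw [← one_mul c, ← commutatorElement_transvection hne hk hij 1 c, commutatorElement_def]
      exact mul_mem (mul_mem (mul_mem (h hne 1) (ih hk)) (inv_mem (h hne 1))) (inv_mem (ih hk))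

theorem eq_top_of_cycle_permMatrix_mem_of_transvection_mem [Subsingleton Kˣ]
    {H : Subgroup (GL ι K)} (hσ : ∀ i j, σ.SameCycle i j) {P : GL ι K} (hP : P ∈ H)
    (hPσ : (P : Matrix ι ι K) = σ⁻¹.permMatrix K) {i : ι} (hi : σ i ≠ i)
    (h : toGL (transvection hi (1 : K)) ∈ H) : H = ⊤ := by
  have coeff_mem (c : K) : toGL (transvection hi c) ∈ H := by
    obtain rfl | hc := eq_or_ne c 0
    · simp
    · rwa [isUnit_iff_eq_one.1 hc.isUnit]
  have cyclic_mem {j : ι} (hj : σ j ≠ j) (c : K) : toGL (transvection hj c) ∈ H := by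
    obtain ⟨k, rfl⟩ := (hσ i j).exists_nat_pow_eq
    induction k with
    | zero => exact coeff_mem c
    | succ k ih =>
      simp only [pow_succ', Perm.mul_apply] at hj ⊢
      exact transvection_perm_apply_mem_of_permMatrix_mem hP hPσ _ (ih (σ.injective.ne_iff.1 hj))
  exact eq_top_of_forall_transvection_mem
    (transvection_mem_of_forall_perm_apply_mem (H := H.comap toGL) hσ cyclic_mem)

theorem closure_Agen_Bgen : Subgroup.closure {Agen, Bgen} = ⊤ := by
  have transitive (i j : Fin 3) : (finRotate 3).SameCycle i j :=
    isCycle_finRotate.sameCycle (by simp) (by simp)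
  have hi : finRotate 3 2 ≠ 2 := by decide
  have Agen_eq : Agen = toGL (transvection hi 1) := by decide +revert
  have Bgen_val : (Bgen : Matrix (Fin 3) (Fin 3) F2) = (finRotate 3)⁻¹.permMatrix F2 := by decide
  exact eq_top_of_cycle_permMatrix_mem_of_transvection_mem transitive
    (Subgroup.subset_closure (by simp)) Bgen_val hi (Agen_eq ▸ Subgroup.subset_closure (by simp))

end Generation

section FixedVectors

open Matrix

variable {n R G : Type*} [Fintype n] [DecidableEq n] [CommRing R] [Group G]

/-- The stabilizer of a row vector `v` under the right action `v ↦ v ᵥ* g` of `GL n R`. For column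
vectors `MulAction.stabilizer` plays this role. -/
def vecMulStabilizer (v : n → R) : Subgroup (GL n R) where
  carrier := {g | v ᵥ* (g : Matrix n n R) = v}
  one_mem' := vecMul_one v
  mul_mem' {g h} hg hh := by
    change _ = v at hg hh ⊢
    rw [Units.val_mul, ← vecMul_vecMul, hg, hh]
  inv_mem' {g} hg := by
    change _ = v at hg ⊢
    conv_lhs => rw [← hg]
    rw [vecMul_vecMul, Units.mul_inv, vecMul_one]

variable {S : Set G} {D : G →* GL n R}

theorem vecMul_eq_self_of_closure_eq_top (hS : Subgroup.closure S = ⊤) {v : n → R}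
    (hv : ∀ s ∈ S, v ᵥ* (D s : Matrix n n R) = v) (g : G) : v ᵥ* (D g : Matrix n n R) = v := by
  have closure_le : Subgroup.closure S ≤ (vecMulStabilizer v).comap D :=
    (Subgroup.closure_le _).2 hv
  exact closure_le (hS ▸ Subgroup.mem_top g)

theorem mulVec_eq_self_of_closure_eq_top (hS : Subgroup.closure S = ⊤) {u : n → R}
    (hu : ∀ s ∈ S, (D s : Matrix n n R) *ᵥ u = u) (g : G) : (D g : Matrix n n R) *ᵥ u = u := by
  have closure_le : Subgroup.closure S ≤ (MulAction.stabilizer (GL n R) u).comap D :=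
    (Subgroup.closure_le _).2 hu
  exact closure_le (hS ▸ Subgroup.mem_top g)

theorem vecMul_apply_of_mulVec_single {M : Matrix n n R} {i : n}
    (hM : M *ᵥ Pi.single i 1 = Pi.single i 1) (w : n → R) : (w ᵥ* M) i = w i := by
  rw [← dotProduct_single_one (w ᵥ* M) i, ← dotProduct_mulVec, hM, dotProduct_single_one]

end FixedVectors

theorem isCompl_ker_span_singleton {R M : Type*} [Ring R] [AddCommGroup M] [Module R M]
    {f : M →ₗ[R] R} {v : M} (hv : f v = 1) : IsCompl f.ker (Submodule.span R {v}) := by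
  constructor
  · rw [Submodule.disjoint_def]
    intro x hx hxv
    obtain ⟨c, rfl⟩ := Submodule.mem_span_singleton.1 hxv
    have hc : c = 0 := by simpa [hv] using hx
    rw [hc, zero_smul]
  · refine codisjoint_iff.2 (eq_top_iff.2 fun w _ => ?_)
    have hker : w - f w • v ∈ f.ker := by simp [hv]
    exact Submodule.mem_sup.2
      ⟨w - f w • v, hker, f w • v, Submodule.mem_span_singleton.2 ⟨f w, rfl⟩, sub_add_cancel _ _⟩

theorem W7'_eq_ker_proj : W7' = (LinearMap.proj 6 : (Fin 7 → F2) →ₗ[F2] F2).ker := rfl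

/-- The vector `v = (1,…,1) ∈ W` is fixed by `D_W(σ)` for every `σ ∈ G`,
the subspace `W' = {w ∈ W : w₇ = 0}` is a `G`-submodule of `W`, and `W = W' ⊕ 𝔽₂·v` as
`G`-modules; in particular the extension `0 → W' → W → 𝔽₂ → 0` of `G`-modules (with `𝔽₂`
the trivial module) splits. -/
theorem stmt8 (D : G3 →* GL (Fin 7) F2)
    (hA : (D Agen : Matrix (Fin 7) (Fin 7) F2) = DWA)
    (hB : (D Bgen : Matrix (Fin 7) (Fin 7) F2) = DWB) :
    -- `v` is fixed by every `D_W(σ)` …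
    (∀ σ : G3, Matrix.vecMul vAll (D σ : Matrix (Fin 7) (Fin 7) F2) = vAll) ∧
    -- … `W'` is a `G`-submodule …
    (∀ σ : G3, ∀ w ∈ W7', Matrix.vecMul w (D σ : Matrix (Fin 7) (Fin 7) F2) ∈ W7') ∧
    -- … and `W = W' ⊕ 𝔽₂·v` as `G`-modules:
    IsCompl W7' (Submodule.span F2 {vAll}) := by
  have fixes_vAll : ∀ σ ∈ ({Agen, Bgen} : Set G3),
      Matrix.vecMul vAll (D σ : Matrix (Fin 7) (Fin 7) F2) = vAll := by
    rintro _ (rfl | rfl)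
    · rw [hA]; decide
    · rw [hB]; decide
  have fixes_single : ∀ σ ∈ ({Agen, Bgen} : Set G3),
      Matrix.mulVec (D σ : Matrix (Fin 7) (Fin 7) F2) (Pi.single 6 1) = Pi.single 6 1 := by
    rintro _ (rfl | rfl)
    · rw [hA]; decide
    · rw [hB]; decide
  refine ⟨vecMul_eq_self_of_closure_eq_top closure_Agen_Bgen fixes_vAll, fun σ w hw => ?_,
    W7'_eq_ker_proj ▸ isCompl_ker_span_singleton rfl⟩
  exact (vecMul_apply_of_mulVec_single
    (mulVec_eq_self_of_closure_eq_top closure_Agen_Bgen fixes_single σ) w).trans hw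
end

section
/- The quartic polynomial C_K = x^4 + y^4 + z^4 + x^2y^2 + y^2z^2 + z^2x^2 + x^2yz + xy^2z + xyz^2 ∈ F_2[x,y,z] is invariant under GL_3(F_2): for every σ ∈ GL_3(F_2), substituting the three linear forms given by (x,y,z)·σ for the variables (x,y,z) in C_K returns C_K. -/
set_option synthInstance.maxHeartbeats 1000000
set_option maxHeartbeats 1000000

open MvPolynomial

/-- The twisted Klein quartic
`C_K = x⁴ + y⁴ + z⁴ + x²y² + y²z² + z²x² + x²yz + xy²z + xyz²` in `𝔽₂[x,y,z]`,
with `x = X 0`, `y = X 1`, `z = X 2`. -/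
noncomputable def CK : MvPolynomial (Fin 3) F2 :=
  X 0 ^ 4 + X 1 ^ 4 + X 2 ^ 4 +
    X 0 ^ 2 * X 1 ^ 2 + X 1 ^ 2 * X 2 ^ 2 + X 2 ^ 2 * X 0 ^ 2 +
    X 0 ^ 2 * X 1 * X 2 + X 0 * X 1 ^ 2 * X 2 + X 0 * X 1 * X 2 ^ 2

/-!
`C_K` is a Dickson invariant: it is the coefficient of `T⁴` in the product of `T - ℓ` over the
eight linear forms `ℓ ∈ 𝔽₂x + 𝔽₂y + 𝔽₂z`. An invertible linear substitution permutes these forms,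
so it fixes every coefficient of the product.

The product is computed by adjoining one variable at a time. If `P` is the product over the
`𝔽₂`-span of some forms, the product after adjoining `a` is `P(T) P(T - a)`; since `P` is an
additive polynomial in characteristic two, this equals `P(T)² + P(a) P(T)`.
-/

theorem linearCombination_sum_smul {ι κ R M : Type*} [Fintype ι] [Fintype κ] [CommSemiring R]
    [AddCommMonoid M] [Module R M] (A : Matrix κ ι R) (x : κ → M) (v : ι → R) :
    Fintype.linearCombination R (fun i => ∑ j, A j i • x j) v =
      Fintype.linearCombination R x (A.mulVec v) := by
  simp only [Fintype.linearCombination_apply, Matrix.mulVec, dotProduct, Finset.smul_sum,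
    Finset.sum_smul, smul_smul]
  rw [Finset.sum_comm]
  simp only [mul_comm]

section SpanPoly

variable {ι R A B : Type*} [Fintype ι] [DecidableEq ι] [CommRing R] [Fintype R]
  [CommRing A] [Algebra R A] [CommRing B] [Algebra R B]

variable (R) in
/-- The polynomial whose roots are the `R`-linear combinations of a finite family `x`, with one
factor for each coefficient vector. When `x` is the family of variables of a polynomial ring over
a finite field, its nonzero coefficients are, up to sign, the Dickson invariants. -/
noncomputable def spanPoly (x : ι → A) : Polynomial A :=
  ∏ v : ι → R, (.X - .C (Fintype.linearCombination R x v))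

theorem map_spanPoly (f : A →ₐ[R] B) (x : ι → A) :
    (spanPoly R x).map (f : A →+* B) = spanPoly R (f ∘ x) := by
  have map_linearCombination (v : ι → R) :
      f (Fintype.linearCombination R x v) = Fintype.linearCombination R (f ∘ x) v := by
    simp [Fintype.linearCombination_apply]
  simp [spanPoly, Polynomial.map_prod, map_linearCombination]

theorem spanPoly_sum_smul (σ : GL ι R) (x : ι → A) :
    spanPoly R (fun i => ∑ j, (σ : Matrix ι ι R) j i • x j) = spanPoly R x := by
  have mulVec_bijective : Function.Bijective (σ : Matrix ι ι R).mulVec :=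
    Finite.injective_iff_bijective.mp (Matrix.mulVec_injective_of_isUnit σ.isUnit)
  simp only [spanPoly, linearCombination_sum_smul]
  exact mulVec_bijective.prod_comp
    fun v => Polynomial.X - Polynomial.C (Fintype.linearCombination R x v)

theorem aeval_coeff_spanPoly_X (σ : GL ι R) (k : ℕ) :
    aeval (fun i => ∑ j, (σ : Matrix ι ι R) j i • (X j : MvPolynomial ι R))
        ((spanPoly R (X : ι → MvPolynomial ι R)).coeff k) =
      (spanPoly R (X : ι → MvPolynomial ι R)).coeff k := by
  set f : MvPolynomial ι R →ₐ[R] MvPolynomial ι R :=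
    aeval fun i => ∑ j, (σ : Matrix ι ι R) j i • X j
  have f_comp_X : f ∘ X = fun i => ∑ j, (σ : Matrix ι ι R) j i • X j :=
    funext fun i => aeval_X _ i
  calc f ((spanPoly R X).coeff k)
      = ((spanPoly R X).map (f : MvPolynomial ι R →+* MvPolynomial ι R)).coeff k :=
        (Polynomial.coeff_map _ k).symm
    _ = (spanPoly R X).coeff k := by rw [map_spanPoly, f_comp_X, spanPoly_sum_smul]

theorem spanPoly_of_isEmpty [IsEmpty ι] (x : ι → A) : spanPoly R x = .X := by
  simp [spanPoly, Fintype.linearCombination_apply]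

theorem spanPoly_vecCons {n : ℕ} (a : A) (x : Fin n → A) :
    spanPoly R (Matrix.vecCons a x) =
      ∏ c : R, (spanPoly R x).comp (.X - .C (c • a)) := by
  simp only [spanPoly, Polynomial.prod_comp]
  rw [← (Fin.consEquiv fun _ => R).prod_comp, Fintype.prod_prod_type]
  simp [Fintype.linearCombination_apply, Fin.sum_univ_succ, sub_sub]

end SpanPoly

section CharTwo

variable {A : Type*} [CommRing A]

theorem mul_comp_X_sub_C_of_two_eq_zero (two_eq_zero : (2 : A) = 0) {P : Polynomial A} {c d : A}
    (hP : P = .X ^ 4 + .C c * .X ^ 2 + .C d * .X) (a : A) :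
    P * P.comp (.X - .C a) =
      .X ^ 8 + .C (c ^ 2 + P.eval a) * .X ^ 4 + .C (d ^ 2 + c * P.eval a) * .X ^ 2 +
        .C (d * P.eval a) * .X := by
  have two_eq_zero_poly : (2 : Polynomial A) = 0 := by
    simpa only [map_ofNat, map_zero] using congrArg Polynomial.C two_eq_zero
  have comp_eq_add : P.comp (.X - .C a) = P + .C (P.eval a) := by
    subst hP
    simp only [Polynomial.add_comp, Polynomial.mul_comp, Polynomial.pow_comp, Polynomial.X_comp,
      Polynomial.C_comp, Polynomial.eval_add, Polynomial.eval_mul, Polynomial.eval_pow,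
      Polynomial.eval_X, Polynomial.eval_C, map_add, map_mul, map_pow]
    grind
  simp only [comp_eq_add, map_add, map_mul, map_pow]
  generalize Polynomial.C (P.eval a) = e
  subst hP
  grind

variable [Algebra F2 A]

theorem two_eq_zero_of_algebra_F2 : (2 : A) = 0 := by
  simpa only [map_ofNat, map_zero] using
    congrArg (algebraMap F2 A) (CharTwo.two_eq_zero (R := F2))

theorem spanPoly_F2_vecCons {n : ℕ} (a : A) (x : Fin n → A) :
    spanPoly F2 (Matrix.vecCons a x) =
      spanPoly F2 x * (spanPoly F2 x).comp (.X - .C a) := by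
  rw [spanPoly_vecCons, show (Finset.univ : Finset F2) = {0, 1} from rfl,
    Finset.prod_pair zero_ne_one]
  simp

theorem spanPoly_F2_pair (y z : A) :
    spanPoly F2 ![y, z] =
      .X ^ 4 + .C (y ^ 2 + y * z + z ^ 2) * .X ^ 2 + .C (y * z * (y + z)) * .X := by
  have two_eq_zero : (2 : Polynomial A) = 0 := two_eq_zero_of_algebra_F2
  simp only [spanPoly_F2_vecCons, spanPoly_of_isEmpty, Polynomial.mul_comp, Polynomial.sub_comp,
    Polynomial.X_comp, Polynomial.C_comp, map_add, map_mul, map_pow]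
  grind

theorem coeff_four_spanPoly_F2_triple (x y z : A) :
    (spanPoly F2 ![x, y, z]).coeff 4 =
      (y ^ 2 + y * z + z ^ 2) ^ 2 + (spanPoly F2 ![y, z]).eval x := by
  rw [spanPoly_F2_vecCons,
    mul_comp_X_sub_C_of_two_eq_zero two_eq_zero_of_algebra_F2 (spanPoly_F2_pair y z)]
  simp only [Polynomial.coeff_add, Polynomial.coeff_C_mul, Polynomial.coeff_X_pow,
    Polynomial.coeff_X]
  norm_num

end CharTwo

theorem CK_eq_coeff_four_spanPoly_X :
    CK = (spanPoly F2 (X : Fin 3 → MvPolynomial (Fin 3) F2)).coeff 4 := by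
  have X_eq_vec : (X : Fin 3 → MvPolynomial (Fin 3) F2) = ![X 0, X 1, X 2] :=
    funext fun i => by fin_cases i <;> rfl
  rw [X_eq_vec, coeff_four_spanPoly_F2_triple, spanPoly_F2_pair, CK]
  simp only [Polynomial.eval_add, Polynomial.eval_mul, Polynomial.eval_pow, Polynomial.eval_X,
    Polynomial.eval_C]
  linear_combination -(X 1 ^ 3 * X 2 + X 1 ^ 2 * X 2 ^ 2 + X 1 * X 2 ^ 3) *
    two_eq_zero_of_algebra_F2 (A := MvPolynomial (Fin 3) F2)

/-- The quartic `C_K` is invariant under `GL₃(𝔽₂)`: for every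
`σ ∈ GL₃(𝔽₂)`, substituting the three linear forms given by `(x,y,z)·σ` for the variables
`(x,y,z)` in `C_K` returns `C_K`. -/
theorem stmt10 (σ : GL (Fin 3) F2) :
    aeval (fun i => ∑ j, (σ : Matrix (Fin 3) (Fin 3) F2) j i • X j) CK = CK := by
  rw [CK_eq_coeff_four_spanPoly_X]
  exact aeval_coeff_spanPoly_X σ 4
end
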